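/- arXiv:2105.07278 — 3 statements merged into one kernel-verified Lean document; each statement's English description precedes it below -/
import Mathlib

section
/- Let c = c₁ + c₂ be a separable nonnegative cost and ζ a pivot measure between μ and ν (i.e., an optimal cardinal flow glues on ζ). Then W_c(μ,ν) = ∫_{X₂} W_{c₁}(μ_{|x₂}, ζ_{|x₂}) dμ₂(x₂) + ∫_{Y₁} W_{c₂}(ζ_{|y₁}, ν_{|y₁}) dν₁(y₁), where μ_{|x₂}, ζ_{|x₂}, ζ_{|y₁}, ν_{|y₁} are conditional laws obtained by disintegration. -/
open MeasureTheory ProbabilityTheory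
open scoped ENNReal ProbabilityTheory

noncomputable section

variable {X₁ X₂ Y₁ Y₂ : Type*} [MeasurableSpace X₁] [MeasurableSpace X₂]
  [MeasurableSpace Y₁] [MeasurableSpace Y₂]

/-- `π` is a transportation plan (coupling) between `μ` and `ν`. -/
def IsCoupling {A B : Type*} [MeasurableSpace A] [MeasurableSpace B]
    (π : Measure (A × B)) (μ : Measure A) (ν : Measure B) : Prop :=
  π.map Prod.fst = μ ∧ π.map Prod.snd = ν

/-- The minimal transportation (Wasserstein) cost for the cost `c`. -/
noncomputable def Wc {A B : Type*} [MeasurableSpace A] [MeasurableSpace B]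
    (c : A → B → ℝ≥0∞) (μ : Measure A) (ν : Measure B) : ℝ≥0∞ :=
  ⨅ π ∈ {π : Measure (A × B) | IsCoupling π μ ν}, ∫⁻ p, c p.1 p.2 ∂π

/-- `(f1, f2)` is a cardinal flow between `μ ∈ P(X₁ × X₂)` and `ν ∈ P(Y₁ × Y₂)`:
the marginal of `f1` on `X = X₁ × X₂` is `μ`, the marginal of `f2` on `Y = Y₁ × Y₂` is `ν`,
and `f1`, `f2` have the same marginal on `Y₁ × X₂`. -/
def IsCardinalFlow (μ : Measure (X₁ × X₂)) (ν : Measure (Y₁ × Y₂))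
    (f1 : Measure ((X₁ × X₂) × Y₁)) (f2 : Measure (X₂ × (Y₁ × Y₂))) : Prop :=
  f1.map Prod.fst = μ ∧ f2.map Prod.snd = ν ∧
    f1.map (fun p => (p.2, p.1.2)) = f2.map (fun p => (p.2.1, p.1))

/-- The set of cardinal flows between `μ` and `ν`. -/
def Flows (μ : Measure (X₁ × X₂)) (ν : Measure (Y₁ × Y₂)) :
    Set (Measure ((X₁ × X₂) × Y₁) × Measure (X₂ × (Y₁ × Y₂))) :=
  {F | IsProbabilityMeasure F.1 ∧ IsProbabilityMeasure F.2 ∧ IsCardinalFlow μ ν F.1 F.2}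

/-- The cardinal flow functional `CT(f¹,f²) = ∫ c₁ df¹ + ∫ c₂ df²`. -/
noncomputable def CT (c₁ : X₁ → Y₁ → ℝ≥0∞) (c₂ : X₂ → Y₂ → ℝ≥0∞)
    (F : Measure ((X₁ × X₂) × Y₁) × Measure (X₂ × (Y₁ × Y₂))) : ℝ≥0∞ :=
  ∫⁻ q, c₁ q.1.1 q.2 ∂F.1 + ∫⁻ q, c₂ q.1 q.2.2 ∂F.2

/-- `ζ` is a pivot measure between `μ` and `ν` for the separable cost `c₁ + c₂`:
some optimal cardinal flow glues on `ζ`. -/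
def IsPivot (μ : Measure (X₁ × X₂)) (ν : Measure (Y₁ × Y₂))
    (c₁ : X₁ → Y₁ → ℝ≥0∞) (c₂ : X₂ → Y₂ → ℝ≥0∞) (ζ : Measure (Y₁ × X₂)) : Prop :=
  ∃ F ∈ Flows μ ν, F.1.map (fun p => (p.2, p.1.2)) = ζ ∧
    CT c₁ c₂ F = ⨅ G ∈ Flows μ ν, CT c₁ c₂ G

namespace Stmt8Aux

open Filter Topology Set

lemma exists_partition (A : Type*) [TopologicalSpace A] [PolishSpace A] [MeasurableSpace A]
    [BorelSpace A] [Nonempty A] :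
    ∃ p : ℕ → A → ℕ, (∀ k, Measurable (p k)) ∧
      ∀ a, ∀ U ∈ 𝓝 a, ∀ᶠ k in atTop, ∀ a', p k a' = p k a → a' ∈ U := by
  classical
  let := TopologicalSpace.upgradeIsCompletelyMetrizable A
  let d := TopologicalSpace.denseSeq A
  have hd : ∀ (k : ℕ) (a : A), ∃ n, dist a (d n) < 1 / ((k : ℝ) + 1) := by
    intro k a
    obtain ⟨_, ⟨n, rfl⟩, hy⟩ := Metric.mem_closure_iff.1
      ((TopologicalSpace.denseRange_denseSeq A) a) (1 / ((k : ℝ) + 1)) (by positivity)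
    exact ⟨n, hy⟩
  refine ⟨fun k a => Nat.find (hd k a), fun k => ?_, fun a U hU => ?_⟩
  · refine measurable_find _ fun n => ?_
    exact measurableSet_lt (by fun_prop) measurable_const
  · obtain ⟨ε, hε, hball⟩ := Metric.mem_nhds_iff.1 hU
    obtain ⟨N, hN⟩ := exists_nat_one_div_lt (half_pos hε)
    filter_upwards [eventually_ge_atTop N] with k hk a' ha'
    apply hball
    have h1 := Nat.find_spec (hd k a)
    have h2 := Nat.find_spec (hd k a')
    have ha'' : Nat.find (hd k a') = Nat.find (hd k a) := ha'
    rw [ha''] at h2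
    have h3 : 1 / ((k : ℝ) + 1) ≤ 1 / ((N : ℝ) + 1) :=
      one_div_le_one_div_of_le (by positivity) (by simpa using hk)
    rw [Metric.mem_ball]
    have := dist_triangle_right a' a (d (Nat.find (hd k a)))
    linarith

/-- the upper step approximation of the cost -/
def cbar {A B : Type*} (c : A → B → ℝ≥0∞) (p : A → ℕ) (q : B → ℕ) (i j : ℕ) : ℝ≥0∞ :=
  ⨆ z : A × B, ⨆ (_ : p z.1 = i ∧ q z.2 = j), c z.1 z.2

lemma le_cbar {A B : Type*} (c : A → B → ℝ≥0∞) (p : A → ℕ) (q : B → ℕ) (a : A) (b : B) :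
    c a b ≤ cbar c p q (p a) (q b) :=
  le_iSup₂_of_le (f := fun (z : A × B) (_ : p z.1 = p a ∧ q z.2 = q b) => c z.1 z.2)
    (a, b) ⟨rfl, rfl⟩ le_rfl

lemma cbar_le {A B : Type*} (c : A → B → ℝ≥0∞) (p : A → ℕ) (q : B → ℕ) (M : ℝ≥0∞)
    (hM : ∀ a b, c a b ≤ M) (i j : ℕ) : cbar c p q i j ≤ M :=
  iSup₂_le fun _ _ => hM _ _

lemma cbar_tendsto {A B : Type*} [TopologicalSpace A] [TopologicalSpace B]
    (c : A → B → ℝ≥0∞) (hc : Continuous fun z : A × B => c z.1 z.2)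
    (p : ℕ → A → ℕ) (q : ℕ → B → ℕ)
    (hp : ∀ a, ∀ U ∈ 𝓝 a, ∀ᶠ k in atTop, ∀ a', p k a' = p k a → a' ∈ U)
    (hq : ∀ a, ∀ U ∈ 𝓝 a, ∀ᶠ k in atTop, ∀ a', q k a' = q k a → a' ∈ U) (a : A) (b : B) :
    Tendsto (fun k => cbar c (p k) (q k) (p k a) (q k b)) atTop (𝓝 (c a b)) := by
  rw [tendsto_order]
  refine ⟨fun u hu => Eventually.of_forall fun k => hu.trans_le (le_cbar ..), fun u hu => ?_⟩
  obtain ⟨v, hv1, hv2⟩ := exists_between hu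
  have h1 : ∀ᶠ z : A × B in 𝓝 (a, b), c z.1 z.2 < v :=
    hc.continuousAt.eventually_lt continuousAt_const hv1
  rw [nhds_prod_eq] at h1
  obtain ⟨U, hU, V, hV, hUV⟩ := mem_prod_iff.1 h1
  filter_upwards [hp a U hU, hq b V hV] with k hk1 hk2
  refine lt_of_le_of_lt (iSup₂_le fun z hz => ?_) hv2
  exact le_of_lt (hUV (mk_mem_prod (hk1 _ hz.1) (hk2 _ hz.2)))

open Classical in
/-- density of the coupling with prescribed cell weights -/
def dens (m n : ℕ → ℝ≥0∞) (a : ℕ → ℕ → ℝ≥0∞) (i j : ℕ) : ℝ≥0∞ :=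
  if (∀ i, ∑' j, a i j ≤ m i) ∧ (∀ j, ∑' i, a i j ≤ n j) ∧ ∑' i, ∑' j, a i j < 1 then
    a i j / (m i * n j) + (1 - (∑' j, a i j) / m i) * (1 - (∑' i, a i j) / n j) /
      (1 - ∑' i, ∑' j, a i j)
  else 1

lemma dens_swap (m n : ℕ → ℝ≥0∞) (a : ℕ → ℕ → ℝ≥0∞) (i j : ℕ) :
    dens n m (fun j i => a i j) j i = dens m n a i j := by
  unfold dens
  have : ∑' j, ∑' i, a i j = ∑' i, ∑' j, a i j := ENNReal.tsum_comm
  rw [this, mul_comm (n j), mul_comm (1 - (∑' i, a i j) / n j)]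
  congr 1
  apply propext
  tauto

lemma mul_one_sub_div {x r : ℝ≥0∞} (hx : x ≠ ⊤) (hr : r ≤ x) : x * (1 - r / x) = x - r := by
  rcases eq_or_ne x 0 with rfl | h0
  · simp
  rw [ENNReal.mul_sub (fun _ _ => hx), mul_one, ENNReal.mul_div_cancel h0 hx]

lemma tsum_residual {n : ℕ → ℝ≥0∞} {a : ℕ → ℕ → ℝ≥0∞} (hn : ∑' j, n j = 1)
    (h2 : ∀ j, ∑' i, a i j ≤ n j) :
    ∑' j, (n j - ∑' i, a i j) = 1 - ∑' i, ∑' j, a i j := by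
  have h : ∑' j, ∑' i, a i j ≤ 1 := hn ▸ ENNReal.tsum_le_tsum h2
  rw [ENNReal.tsum_sub (ne_top_of_le_ne_top ENNReal.one_ne_top h) h2, hn, ENNReal.tsum_comm]

lemma dens_row (m n : ℕ → ℝ≥0∞) (a : ℕ → ℕ → ℝ≥0∞) (hm : ∑' i, m i = 1)
    (hn : ∑' j, n j = 1) (i : ℕ) (hi : m i ≠ 0) : ∑' j, n j * dens m n a i j = 1 := by
  have hmi : ∀ i, m i ≠ ⊤ := fun i =>
    ne_top_of_le_ne_top (by simp [hm]) (ENNReal.le_tsum (f := m) i)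
  have hni : ∀ i, n i ≠ ⊤ := fun i =>
    ne_top_of_le_ne_top (by simp [hn]) (ENNReal.le_tsum (f := n) i)
  unfold dens
  split_ifs with h
  · obtain ⟨h1, h2, h3⟩ := h
    have e : ∀ j, n j * (a i j / (m i * n j) + (1 - (∑' j, a i j) / m i) *
        (1 - (∑' i, a i j) / n j) / (1 - ∑' i, ∑' j, a i j)) =
        a i j * (m i)⁻¹ + ((1 - (∑' j, a i j) / m i) / (1 - ∑' i, ∑' j, a i j)) *
          (n j - ∑' i, a i j) := by
      intro j
      rw [mul_add, ← mul_one_sub_div (hni j) (h2 j)]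
      congr 1
      · rcases eq_or_ne (n j) 0 with h0 | h0
        · have : a i j = 0 := by
            have := (ENNReal.le_tsum (f := fun i => a i j) i).trans (h2 j)
            rw [h0] at this
            simpa using this
          simp [this]
        · rw [div_eq_mul_inv, ENNReal.mul_inv (Or.inl hi) (Or.inr h0)]
          rw [show n j * (a i j * ((m i)⁻¹ * (n j)⁻¹)) = a i j * (m i)⁻¹ * (n j * (n j)⁻¹) by ring,
            ENNReal.mul_inv_cancel h0 (hni j), mul_one]
      · simp only [div_eq_mul_inv]
        ring
    simp_rw [e]
    rw [ENNReal.tsum_add, ENNReal.tsum_mul_right, ENNReal.tsum_mul_left, tsum_residual hn h2,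
      ENNReal.div_mul_cancel, ← div_eq_mul_inv, add_tsub_cancel_of_le]
    · exact ENNReal.div_le_of_le_mul (by simpa using h1 i)
    · exact (tsub_pos_of_lt h3).ne'
    · exact ne_top_of_le_ne_top ENNReal.one_ne_top tsub_le_self
  · simpa using hn

lemma dens_cost (m n : ℕ → ℝ≥0∞) (a : ℕ → ℕ → ℝ≥0∞) (hm : ∑' i, m i = 1)
    (hn : ∑' j, n j = 1) (h1 : ∀ i, ∑' j, a i j ≤ m i) (h2 : ∀ j, ∑' i, a i j ≤ n j)
    (h3 : ∑' i, ∑' j, a i j < 1) (M : ℝ≥0∞) (f : ℕ → ℕ → ℝ≥0∞) (hf : ∀ i j, f i j ≤ M) :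
    ∑' i, ∑' j, f i j * (m i * n j * dens m n a i j) ≤
      ∑' i, ∑' j, f i j * a i j + M * (1 - ∑' i, ∑' j, a i j) := by
  have hmi : ∀ i, m i ≠ ⊤ := fun i =>
    ne_top_of_le_ne_top (by simp [hm]) (ENNReal.le_tsum (f := m) i)
  have hni : ∀ i, n i ≠ ⊤ := fun i =>
    ne_top_of_le_ne_top (by simp [hn]) (ENNReal.le_tsum (f := n) i)
  have key : ∀ i j, f i j * (m i * n j * dens m n a i j) ≤ f i j * a i j +
      M * ((m i - ∑' j, a i j) * ((n j - ∑' i, a i j) * (1 - ∑' i, ∑' j, a i j)⁻¹)) := by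
    intro i j
    unfold dens
    rw [if_pos ⟨h1, h2, h3⟩, mul_add, mul_add]
    refine add_le_add (mul_le_mul' le_rfl ENNReal.mul_div_le) (mul_le_mul' (hf i j) ?_)
    rw [← mul_one_sub_div (hni j) (h2 j), ← mul_one_sub_div (hmi i) (h1 i)]
    apply le_of_eq
    simp only [div_eq_mul_inv]
    ring
  refine (ENNReal.tsum_le_tsum fun i => ENNReal.tsum_le_tsum fun j => key i j).trans ?_
  simp_rw [ENNReal.tsum_add, ENNReal.tsum_mul_left, ENNReal.tsum_mul_right]
  rw [tsum_residual hn h2, ENNReal.mul_inv_cancel, mul_one]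
  · gcongr
    have := tsum_residual (n := m) (a := fun j i => a i j) hm h1
    rw [this, ENNReal.tsum_comm]
  · exact (tsub_pos_of_lt h3).ne'
  · exact ne_top_of_le_ne_top ENNReal.one_ne_top tsub_le_self

/-- approximation of weights by rational finitely supported ones -/
lemma exists_weights (w : ℕ → ℕ → ℝ≥0∞) (hw : ∑' i, ∑' j, w i j = 1) (ε : ℝ≥0∞) (hε : ε ≠ 0) :
    ∃ x : (ℕ × ℕ) →₀ ℚ, (∀ i j, ENNReal.ofReal (x (i, j)) ≤ w i j) ∧
      ∑' i, ∑' j, ENNReal.ofReal (x (i, j)) < 1 ∧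
      1 - ∑' i, ∑' j, ENNReal.ofReal (x (i, j)) ≤ ε := by
  classical
  have hε2 : ε / 2 ≠ 0 := by simpa using hε
  obtain ⟨δ, hδ, hδs⟩ := ENNReal.exists_pos_sum_of_countable' hε2 (ℕ × ℕ)
  have hw' : ∑' z : ℕ × ℕ, w z.1 z.2 = 1 := by rw [← hw, ENNReal.tsum_prod]
  have hwt : ∀ z : ℕ × ℕ, w z.1 z.2 ≠ ⊤ := fun z => ne_top_of_le_ne_top (by simp [hw'])
    (ENNReal.le_tsum (f := fun z : ℕ × ℕ => w z.1 z.2) z)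
  have hq : ∀ z : ℕ × ℕ, ∃ q : ℚ, ENNReal.ofReal q ≤ w z.1 z.2 ∧
      (ENNReal.ofReal q < w z.1 z.2 ∨ ENNReal.ofReal q = 0) ∧
      w z.1 z.2 ≤ ENNReal.ofReal q + δ z := by
    intro z
    rcases eq_or_ne (w z.1 z.2) 0 with h0 | h0
    · exact ⟨0, by simp [h0]⟩
    · have : w z.1 z.2 - δ z < w z.1 z.2 := ENNReal.sub_lt_self (hwt z) h0 (hδ z).ne'
      obtain ⟨q, hq0, hq1, hq2⟩ := ENNReal.lt_iff_exists_rat_btwn.1 this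
      refine ⟨q, hq2.le, Or.inl hq2, ?_⟩
      exact tsub_le_iff_right.1 hq1.le
  choose q hq1 hq2 hq3 using hq
  obtain ⟨F, hF⟩ : ∃ F : Finset (ℕ × ℕ), 1 ≤ ∑ z ∈ F, w z.1 z.2 + ε / 2 := by
    have : 1 - ε / 2 < ∑' z : ℕ × ℕ, w z.1 z.2 := by
      rw [hw']
      exact ENNReal.sub_lt_self ENNReal.one_ne_top one_ne_zero hε2
    rw [ENNReal.tsum_eq_iSup_sum, lt_iSup_iff] at this
    obtain ⟨F, hF⟩ := this
    exact ⟨F, tsub_le_iff_right.1 hF.le⟩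
  let x : (ℕ × ℕ) →₀ ℚ := Finsupp.onFinset F (fun z => if z ∈ F then q z else 0) (by
    intro z hz
    by_contra h
    simp [h] at hz)
  have hx : ∀ z, x z = if z ∈ F then q z else 0 := fun z => rfl
  have hxle : ∀ z, ENNReal.ofReal (x z) ≤ w z.1 z.2 := by
    intro z
    rw [hx]
    split_ifs
    · exact hq1 z
    · simp
  have hT : ∑' i, ∑' j, ENNReal.ofReal (x (i, j)) = ∑' z, ENNReal.ofReal (x z) := by
    rw [ENNReal.tsum_prod']
  refine ⟨x, fun i j => hxle (i, j), ?_, ?_⟩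
  · rw [hT]
    by_cases h : ∀ z, ENNReal.ofReal (x z) = 0
    · simp [h]
    · push Not at h
      obtain ⟨z, hz⟩ := h
      rw [← hw']
      have hle : ∑' z, ENNReal.ofReal (x z) ≤ 1 := hw' ▸ ENNReal.tsum_le_tsum hxle
      refine ENNReal.tsum_lt_tsum (i := z) (ne_top_of_le_ne_top ENNReal.one_ne_top hle) hxle ?_
      rw [hx] at hz ⊢
      split_ifs at hz ⊢ with hzF
      · exact (hq2 z).resolve_right hz
      · simp at hz
  · rw [hT, tsub_le_iff_left]
    calc (1 : ℝ≥0∞) ≤ ∑ z ∈ F, w z.1 z.2 + ε / 2 := hF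
      _ ≤ ∑ z ∈ F, (ENNReal.ofReal (x z) + δ z) + ε / 2 := by
          gcongr with z hz
          rw [hx, if_pos hz]
          exact hq3 z
      _ ≤ (∑' z, ENNReal.ofReal (x z) + ∑' z, δ z) + ε / 2 := by
          rw [Finset.sum_add_distrib]
          gcongr
          · exact ENNReal.sum_le_tsum F
          · exact ENNReal.sum_le_tsum F
      _ ≤ (∑' z, ENNReal.ofReal (x z) + ε / 2) + ε / 2 := by gcongr
      _ = _ := by rw [add_assoc, ENNReal.add_halves]

attribute [irreducible] dens cbar

lemma measurable_comp2 {A B : Type*} [MeasurableSpace A] [MeasurableSpace B]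
    {p : A → ℕ} (hp : Measurable p) {q : B → ℕ} (hq : Measurable q) (g : ℕ → ℕ → ℝ≥0∞) :
    Measurable fun z : A × B => g (p z.1) (q z.2) := by
  have : Measurable fun z : ℕ × ℕ => g z.1 z.2 := measurable_of_countable _
  exact this.comp ((hp.comp measurable_fst).prodMk (hq.comp measurable_snd))

lemma lintegral_comp_nat {A : Type*} [MeasurableSpace A] (m : Measure A) {p : A → ℕ}
    (hp : Measurable p) (g : ℕ → ℝ≥0∞) :
    ∫⁻ a, g (p a) ∂m = ∑' i, g i * m (p ⁻¹' {i}) := by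
  rw [← lintegral_map (f := g) (measurable_of_countable g) hp, lintegral_countable']
  simp_rw [Measure.map_apply hp (measurableSet_singleton _)]

lemma tsum_cells {A : Type*} [MeasurableSpace A] (m : Measure A) [IsProbabilityMeasure m]
    {p : A → ℕ} (hp : Measurable p) : ∑' i, m (p ⁻¹' {i}) = 1 := by
  simpa using (lintegral_comp_nat m hp (fun _ => 1)).symm

lemma ae_cell_ne_zero {A : Type*} [MeasurableSpace A] (m : Measure A)
    (p : A → ℕ) : ∀ᵐ a ∂m, m (p ⁻¹' {p a}) ≠ 0 := by
  rw [ae_iff]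
  have : {a | ¬ m (p ⁻¹' {p a}) ≠ 0} ⊆ ⋃ i ∈ {i : ℕ | m (p ⁻¹' {i}) = 0}, p ⁻¹' {i} := by
    intro a ha
    simp only [ne_eq, not_not, Set.mem_ofPred_eq] at ha
    simp only [Set.mem_iUnion]
    exact ⟨p a, ha, rfl⟩
  refine measure_mono_null this ?_
  rw [measure_biUnion_null_iff (Set.to_countable _)]
  exact fun i hi => hi

lemma withDensity_coupling {A B : Type*} [MeasurableSpace A] [MeasurableSpace B]
    (m : Measure A) (n : Measure B) [IsProbabilityMeasure m] [IsProbabilityMeasure n]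
    {p : A → ℕ} (hp : Measurable p) {q : B → ℕ} (hq : Measurable q) (a : ℕ → ℕ → ℝ≥0∞) :
    IsCoupling ((m.prod n).withDensity fun z =>
      dens (fun i => m (p ⁻¹' {i})) (fun j => n (q ⁻¹' {j})) a (p z.1) (q z.2)) m n := by
  have hmeas : Measurable fun z : A × B =>
      dens (fun i => m (p ⁻¹' {i})) (fun j => n (q ⁻¹' {j})) a (p z.1) (q z.2) :=
    measurable_comp2 hp hq (dens (fun i => m (p ⁻¹' {i})) (fun j => n (q ⁻¹' {j})) a)
  constructor
  · ext E hE
    rw [Measure.map_apply measurable_fst hE, withDensity_apply _ (measurable_fst hE),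
      ← Set.prod_univ, setLIntegral_prod _ hmeas.aemeasurable]
    simp only [Measure.restrict_univ]
    have : ∀ᵐ x ∂m, ∫⁻ y, dens (fun i => m (p ⁻¹' {i})) (fun j => n (q ⁻¹' {j})) a (p x) (q y) ∂n
        = 1 := by
      filter_upwards [ae_cell_ne_zero m p] with x hx
      rw [lintegral_comp_nat n hq]
      simp_rw [mul_comm _ (n _)]
      exact dens_row _ _ a (tsum_cells m hp) (tsum_cells n hq) _ hx
    rw [lintegral_congr_ae (ae_restrict_of_ae this)]
    simp
  · ext E hE
    rw [Measure.map_apply measurable_snd hE, withDensity_apply _ (measurable_snd hE),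
      ← Set.univ_prod, setLIntegral_prod_symm _ hmeas.aemeasurable]
    simp only [Measure.restrict_univ]
    have : ∀ᵐ y ∂n, ∫⁻ x, dens (fun i => m (p ⁻¹' {i})) (fun j => n (q ⁻¹' {j})) a (p x) (q y) ∂m
        = 1 := by
      filter_upwards [ae_cell_ne_zero n q] with y hy
      rw [lintegral_comp_nat m hp (fun i => dens _ _ a i (q y))]
      simp_rw [mul_comm _ (m _), ← dens_swap _ _ a]
      exact dens_row _ _ _ (tsum_cells n hq) (tsum_cells m hp) _ hy
    rw [lintegral_congr_ae (ae_restrict_of_ae this)]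
    simp

lemma measurable_dens {S : Type*} [MeasurableSpace S] (m n : S → ℕ → ℝ≥0∞)
    (hm : ∀ i, Measurable fun s => m s i) (hn : ∀ i, Measurable fun s => n s i)
    (a : ℕ → ℕ → ℝ≥0∞) (i j : ℕ) : Measurable fun s => dens (m s) (n s) a i j := by
  unfold dens
  refine Measurable.ite ?_ ?_ measurable_const
  · have h : MeasurableSet ((⋂ i, {s | ∑' j, a i j ≤ m s i}) ∩ ((⋂ j, {s | ∑' i, a i j ≤ n s j}) ∩
        {_s : S | ∑' i, ∑' j, a i j < 1})) :=
      (MeasurableSet.iInter fun i => measurableSet_le measurable_const (hm i)).inter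
        ((MeasurableSet.iInter fun i => measurableSet_le measurable_const (hn i)).inter
          (MeasurableSet.const _))
    have e : {s | (∀ i, ∑' j, a i j ≤ m s i) ∧ (∀ j, ∑' i, a i j ≤ n s j) ∧
        ∑' i, ∑' j, a i j < 1} = (⋂ i, {s | ∑' j, a i j ≤ m s i}) ∩
        ((⋂ j, {s | ∑' i, a i j ≤ n s j}) ∩ {_s : S | ∑' i, ∑' j, a i j < 1}) := by
      ext s
      simp
    rw [e]
    exact h
  · fun_prop

variable {S A B : Type*} [MeasurableSpace S] [MeasurableSpace A] [MeasurableSpace B]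

/-- the kernel of couplings with prescribed cell weights -/
def cellKernel (κ : Kernel S A) (η : Kernel S B) [IsMarkovKernel κ] [IsMarkovKernel η]
    (p : A → ℕ) (q : B → ℕ) (a : ℕ → ℕ → ℝ≥0∞) : Kernel S (A × B) :=
  (κ ×ₖ η).withDensity fun s z =>
    dens (fun i => κ s (p ⁻¹' {i})) (fun j => η s (q ⁻¹' {j})) a (p z.1) (q z.2)

lemma cellKernel_apply (κ : Kernel S A) (η : Kernel S B) [IsMarkovKernel κ] [IsMarkovKernel η]
    {p : A → ℕ} (hp : Measurable p) {q : B → ℕ} (hq : Measurable q) (a : ℕ → ℕ → ℝ≥0∞) (s : S) :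
    cellKernel κ η p q a s = ((κ s).prod (η s)).withDensity fun z =>
      dens (fun i => κ s (p ⁻¹' {i})) (fun j => η s (q ⁻¹' {j})) a (p z.1) (q z.2) := by
  have h : Measurable fun w : S × (ℕ × ℕ) =>
      dens (fun i => κ w.1 (p ⁻¹' {i})) (fun j => η w.1 (q ⁻¹' {j})) a w.2.1 w.2.2 := by
    refine measurable_from_prod_countable_left fun y => ?_
    exact measurable_dens _ _ (fun i => κ.measurable_coe (hp (measurableSet_singleton i)))
      (fun i => η.measurable_coe (hq (measurableSet_singleton i))) a y.1 y.2
  unfold cellKernel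
  rw [Kernel.withDensity_apply, Kernel.prod_apply]
  exact h.comp (measurable_fst.prodMk ((hp.comp (measurable_fst.comp measurable_snd)).prodMk
    (hq.comp (measurable_snd.comp measurable_snd))))

lemma cellKernel_cost {m : Measure A} {n : Measure B} [IsProbabilityMeasure m]
    [IsProbabilityMeasure n] {p : A → ℕ} (hp : Measurable p) {q : B → ℕ} (hq : Measurable q)
    (c : A → B → ℝ≥0∞) (hc : Measurable fun z : A × B => c z.1 z.2)
    (M : ℝ≥0∞) (hM : ∀ a b, c a b ≤ M) (π : Measure (A × B)) (hπ : IsCoupling π m n)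
    (ε : ℝ≥0∞) (hε : ε ≠ 0) :
    ∃ x : (ℕ × ℕ) →₀ ℚ, ∫⁻ z, c z.1 z.2 ∂((m.prod n).withDensity fun z =>
      dens (fun i => m (p ⁻¹' {i})) (fun j => n (q ⁻¹' {j})) (fun i j => ENNReal.ofReal (x (i, j)))
        (p z.1) (q z.2)) ≤ ∫⁻ z, cbar c p q (p z.1) (q z.2) ∂π + M * ε := by
  have : IsProbabilityMeasure π := by
    constructor
    have := congrArg (fun μ => μ Set.univ) hπ.1
    simpa [Measure.map_apply measurable_fst MeasurableSet.univ] using this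
  have hcomp : ∀ (ρ : Measure (A × B)) (g : ℕ → ℕ → ℝ≥0∞), ∫⁻ z, g (p z.1) (q z.2) ∂ρ =
      ∑' i, ∑' j, g i j * ρ ((p ⁻¹' {i}) ×ˢ (q ⁻¹' {j})) := by
    intro ρ g
    have h1 : Measurable fun z : A × B => (p z.1, q z.2) :=
      (hp.comp measurable_fst).prodMk (hq.comp measurable_snd)
    rw [← lintegral_map (f := fun w : ℕ × ℕ => g w.1 w.2) (measurable_of_countable _) h1,
      lintegral_countable', ENNReal.tsum_prod']
    refine tsum_congr fun i => tsum_congr fun j => ?_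
    rw [Measure.map_apply h1 (measurableSet_singleton _)]
    congr 2
    ext z
    simp
  set w : ℕ → ℕ → ℝ≥0∞ := fun i j => π ((p ⁻¹' {i}) ×ˢ (q ⁻¹' {j})) with hwdef
  have hw : ∑' i, ∑' j, w i j = 1 := by
    simpa using (hcomp π (fun _ _ => 1)).symm
  obtain ⟨x, hx1, hx2, hx3⟩ := exists_weights w hw ε hε
  refine ⟨x, ?_⟩
  set a : ℕ → ℕ → ℝ≥0∞ := fun i j => ENNReal.ofReal (x (i, j)) with ha
  have hdm : Measurable fun z : A × B =>
      dens (fun i => m (p ⁻¹' {i})) (fun j => n (q ⁻¹' {j})) a (p z.1) (q z.2) :=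
    measurable_comp2 hp hq (dens (fun i => m (p ⁻¹' {i})) (fun j => n (q ⁻¹' {j})) a)
  have hrow : ∀ i, ∑' j, w i j = m (p ⁻¹' {i}) := by
    intro i
    rw [← hπ.1, Measure.map_apply measurable_fst (hp (measurableSet_singleton i)), hwdef,
      ← measure_iUnion]
    · congr 1
      ext z
      simp
    · intro j j' hj
      rw [Function.onFun, Set.disjoint_left]
      rintro z ⟨_, hz⟩ ⟨_, hz'⟩
      exact hj (hz.symm.trans hz')
    · exact fun j => (hp (measurableSet_singleton i)).prod (hq (measurableSet_singleton j))
  have hcol : ∀ j, ∑' i, w i j = n (q ⁻¹' {j}) := by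
    intro j
    rw [← hπ.2, Measure.map_apply measurable_snd (hq (measurableSet_singleton j)), hwdef,
      ← measure_iUnion]
    · congr 1
      ext z
      simp
    · intro j j' hj
      rw [Function.onFun, Set.disjoint_left]
      rintro z ⟨hz, _⟩ ⟨hz', _⟩
      exact hj (hz.symm.trans hz')
    · exact fun i => (hp (measurableSet_singleton i)).prod (hq (measurableSet_singleton j))
  rw [lintegral_withDensity_eq_lintegral_mul _ hdm hc]
  calc _ ≤ ∫⁻ z, cbar c p q (p z.1) (q z.2) * dens (fun i => m (p ⁻¹' {i}))
          (fun j => n (q ⁻¹' {j})) a (p z.1) (q z.2) ∂(m.prod n) := by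
        refine lintegral_mono fun z => ?_
        simp only [Pi.mul_apply]
        rw [mul_comm]
        gcongr
        exact le_cbar c p q z.1 z.2
    _ = ∑' i, ∑' j, cbar c p q i j * (m (p ⁻¹' {i}) * n (q ⁻¹' {j}) *
          dens (fun i => m (p ⁻¹' {i})) (fun j => n (q ⁻¹' {j})) a i j) := by
        rw [hcomp (m.prod n) (fun i j => cbar c p q i j * dens (fun i => m (p ⁻¹' {i}))
          (fun j => n (q ⁻¹' {j})) a i j)]
        refine tsum_congr fun i => tsum_congr fun j => ?_
        rw [Measure.prod_prod]
        ring
    _ ≤ ∑' i, ∑' j, cbar c p q i j * a i j + M * (1 - ∑' i, ∑' j, a i j) := by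
        refine dens_cost _ _ a (tsum_cells m hp) (tsum_cells n hq) (fun i => ?_) (fun j => ?_)
          hx2 M _ (cbar_le c p q M hM)
        · exact (ENNReal.tsum_le_tsum fun j => hx1 i j).trans (hrow i).le
        · exact (ENNReal.tsum_le_tsum fun i => hx1 i j).trans (hcol j).le
    _ ≤ ∑' i, ∑' j, cbar c p q i j * w i j + M * ε := by
        gcongr with i j
        exact hx1 i j
    _ = _ := by rw [hcomp π]

lemma exists_family (κ : Kernel S A) (η : Kernel S B) [IsMarkovKernel κ] [IsMarkovKernel η]
    (p : ℕ → A → ℕ) (hpm : ∀ k, Measurable (p k)) (q : ℕ → B → ℕ) (hqm : ∀ k, Measurable (q k)) :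
    ∃ K : ℕ → Kernel S (A × B), (∀ i s, IsCoupling (K i s) (κ s) (η s)) ∧
      ∀ (k : ℕ) (x : (ℕ × ℕ) →₀ ℚ), ∃ i, ∀ s, K i s = ((κ s).prod (η s)).withDensity fun z =>
        dens (fun i => κ s (p k ⁻¹' {i})) (fun j => η s (q k ⁻¹' {j}))
          (fun i j => ENNReal.ofReal (x (i, j))) (p k z.1) (q k z.2) := by
  obtain ⟨e, he⟩ := exists_surjective_nat (ℕ × ((ℕ × ℕ) →₀ ℚ))
  refine ⟨fun i => cellKernel κ η (p (e i).1) (q (e i).1)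
    (fun k l => ENNReal.ofReal ((e i).2 (k, l))), fun i s => ?_, fun k x => ?_⟩
  · rw [cellKernel_apply κ η (hpm _) (hqm _)]
    exact withDensity_coupling _ _ (hpm _) (hqm _) _
  · obtain ⟨i, hi⟩ := he (k, x)
    refine ⟨i, fun s => ?_⟩
    rw [cellKernel_apply κ η (hpm _) (hqm _), hi]

/-- measurable almost-optimal selection for bounded continuous costs -/
lemma bounded_selection [TopologicalSpace A] [PolishSpace A] [BorelSpace A]
    [TopologicalSpace B] [PolishSpace B] [BorelSpace B] [Nonempty A] [Nonempty B]
    (κ : Kernel S A) (η : Kernel S B) [IsMarkovKernel κ] [IsMarkovKernel η]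
    (c : A → B → ℝ≥0∞) (hc : Continuous fun z : A × B => c z.1 z.2)
    (M : ℝ≥0∞) (hMt : M ≠ ⊤) (hM : ∀ a b, c a b ≤ M) (ε : ℝ≥0∞) (hε : ε ≠ 0) :
    ∃ γ : Kernel S (A × B), (∀ s, IsCoupling (γ s) (κ s) (η s)) ∧
      ∀ s, ∫⁻ z, c z.1 z.2 ∂(γ s) ≤ Wc c (κ s) (η s) + ε := by
  classical
  obtain ⟨p, hpm, hp⟩ := exists_partition A
  obtain ⟨q, hqm, hq⟩ := exists_partition B
  have hcm : Measurable fun z : A × B => c z.1 z.2 := hc.measurable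
  obtain ⟨K, hKc, hKe⟩ := exists_family κ η p hpm q hqm
  let J : ℕ → S → ℝ≥0∞ := fun i s => ∫⁻ z, c z.1 z.2 ∂(K i s)
  have hJm : ∀ i, Measurable (J i) := fun i => hcm.lintegral_kernel
  have hJM : ∀ i s, J i s ≤ M := by
    intro i s
    have : IsProbabilityMeasure (K i s) := by
      constructor
      have := congrArg (fun μ => μ Set.univ) (hKc i s).1
      simpa [Measure.map_apply measurable_fst MeasurableSet.univ] using this
    calc J i s ≤ ∫⁻ z, M ∂(K i s) := lintegral_mono fun z => hM _ _
      _ = M := by simp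
  have hJW : ∀ s, ⨅ i, J i s ≤ Wc c (κ s) (η s) := by
    intro s
    refine le_iInf₂ fun π hπ => ?_
    have hπ' : IsCoupling π (κ s) (η s) := hπ
    have : IsProbabilityMeasure π := by
      constructor
      have := congrArg (fun μ => μ Set.univ) hπ'.1
      simpa [Measure.map_apply measurable_fst MeasurableSet.univ] using this
    have hlim : Tendsto (fun k => ∫⁻ z, cbar c (p k) (q k) (p k z.1) (q k z.2) ∂π) atTop
        (𝓝 (∫⁻ z, c z.1 z.2 ∂π)) := by
      refine tendsto_lintegral_of_dominated_convergence (fun _ => M) (fun k => ?_) (fun k => ?_)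
        (by simpa using hMt) ?_
      · exact measurable_comp2 (hpm k) (hqm k) (cbar c (p k) (q k))
      · exact ae_of_all _ fun z => cbar_le _ _ _ _ hM _ _
      · exact ae_of_all _ fun z => cbar_tendsto c hc p q hp hq z.1 z.2
    refine ENNReal.le_of_forall_pos_le_add fun δ hδ _ => ?_
    have hδ' : (δ : ℝ≥0∞) / (M + 1) ≠ 0 := by
      simp [ENNReal.div_eq_zero_iff, hδ.ne', hMt]
    have hlim2 := hlim.add_const (M * ((δ : ℝ≥0∞) / (M + 1)))
    have hbd : ∫⁻ z, c z.1 z.2 ∂π + M * ((δ : ℝ≥0∞) / (M + 1)) ≤ ∫⁻ z, c z.1 z.2 ∂π + δ := by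
      gcongr
      calc M * ((δ : ℝ≥0∞) / (M + 1)) ≤ (M + 1) * ((δ : ℝ≥0∞) / (M + 1)) := by
            gcongr
            exact le_self_add
        _ ≤ δ := ENNReal.mul_div_le
    refine (ge_of_tendsto hlim2 (Eventually.of_forall fun k => ?_)).trans hbd
    obtain ⟨x, hx⟩ := cellKernel_cost (m := κ s) (n := η s) (hpm k) (hqm k) c hcm M hM π hπ' _ hδ'
    obtain ⟨i, hi⟩ := hKe k x
    refine (iInf_le _ i).trans (le_trans (le_of_eq ?_) hx)
    simp only [J]
    rw [hi s]
  have hex : ∀ s, ∃ i, J i s ≤ (⨅ i, J i s) + ε := by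
    intro s
    have : ⨅ i, J i s < (⨅ i, J i s) + ε :=
      ENNReal.lt_add_right (ne_top_of_le_ne_top hMt ((iInf_le _ 0).trans (hJM 0 s))) hε
    obtain ⟨i, hi⟩ := iInf_lt_iff.1 this
    exact ⟨i, hi.le⟩
  have hNm : Measurable fun s => Nat.find (hex s) := by
    refine measurable_find _ fun n => ?_
    exact measurableSet_le (hJm n) ((Measurable.iInf hJm).add_const _)
  have hKm : Measurable fun w : ℕ × S => K w.1 w.2 :=
    measurable_from_prod_countable_right fun i => (K i).measurable
  refine ⟨⟨fun s => K (Nat.find (hex s)) s, hKm.comp (hNm.prodMk measurable_id)⟩,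
    fun s => hKc _ s, fun s => ?_⟩
  exact (Nat.find_spec (hex s)).trans (by gcongr; exact hJW s)

lemma compProd_marginal {C : Type*} [MeasurableSpace C] (ρ : Measure S) [IsProbabilityMeasure ρ]
    (γ : Kernel S A) [IsMarkovKernel γ] (κ : Kernel S C) [IsMarkovKernel κ]
    {g : A → C} (hg : Measurable g) (h : ∀ s, (γ s).map g = κ s) :
    (ρ ⊗ₘ γ).map (fun z => (z.1, g z.2)) = ρ ⊗ₘ κ := by
  have : γ.map g = κ := by
    ext1 s
    rw [Kernel.map_apply _ hg, h]
  rw [← this, Measure.compProd_map hg]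
  rfl

lemma key [TopologicalSpace S] [PolishSpace S] [BorelSpace S]
    [TopologicalSpace A] [PolishSpace A] [BorelSpace A]
    [TopologicalSpace B] [PolishSpace B] [BorelSpace B]
    (ρ : Measure S) [IsProbabilityMeasure ρ]
    (κ : Kernel S A) (η : Kernel S B) [IsMarkovKernel κ] [IsMarkovKernel η]
    (c : A → B → ℝ≥0∞) (hc : Continuous fun z : A × B => c z.1 z.2) :
    ∃ f : Measure (S × (A × B)), IsProbabilityMeasure f ∧
      f.map (fun z => (z.1, z.2.1)) = ρ ⊗ₘ κ ∧ f.map (fun z => (z.1, z.2.2)) = ρ ⊗ₘ η ∧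
      ∫⁻ z, c z.2.1 z.2.2 ∂f ≤ ∫⁻ s, Wc c (κ s) (η s) ∂ρ := by
  classical
  obtain ⟨s0⟩ : Nonempty S := ρ.nonempty_of_neZero
  have hA : Nonempty A := (κ s0).nonempty_of_neZero
  have hB : Nonempty B := (η s0).nonempty_of_neZero
  let cn : ℕ → A → B → ℝ≥0∞ := fun n a b => min (c a b) n
  have hcn : ∀ n, Continuous fun z : A × B => cn n z.1 z.2 := fun n => hc.min continuous_const
  have hcnM : ∀ n a b, cn n a b ≤ n := fun n a b => min_le_right _ _
  have hcnc : ∀ n a b, cn n a b ≤ c a b := fun n a b => min_le_left _ _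
  have hcnmono : ∀ a b, Monotone fun n => cn n a b := fun a b i j hij =>
    min_le_min le_rfl (by exact_mod_cast hij)
  have hWmono : ∀ n m m', Wc (cn n) m m' ≤ Wc c m m' := fun n m m' =>
    iInf₂_mono fun π _ => lintegral_mono fun z => hcnc n _ _
  have hγ := fun n : ℕ => bounded_selection κ η (cn n) (hcn n) n (ENNReal.natCast_ne_top n)
    (hcnM n) (((n : ℝ≥0∞) + 1)⁻¹) (ENNReal.inv_ne_zero.2 (by finiteness))
  choose γ hγ1 hγ2 using hγ
  have hγM : ∀ n, IsMarkovKernel (γ n) := fun n => ⟨fun s => by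
    constructor
    have := congrArg (fun μ => μ Set.univ) (hγ1 n s).1
    simpa [Measure.map_apply measurable_fst MeasurableSet.univ] using this⟩
  let P : Set (ProbabilityMeasure (S × (A × B))) :=
    {f | (f : Measure (S × (A × B))).map (fun z => (z.1, z.2.1)) = ρ ⊗ₘ κ ∧
      (f : Measure (S × (A × B))).map (fun z => (z.1, z.2.2)) = ρ ⊗ₘ η}
  have hg1 : Continuous fun z : S × (A × B) => (z.1, z.2.1) := by fun_prop
  have hg2 : Continuous fun z : S × (A × B) => (z.1, z.2.2) := by fun_prop
  have hPclosed : IsClosed P := by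
    have h1 := ProbabilityMeasure.continuous_map hg1
    have h2 := ProbabilityMeasure.continuous_map hg2
    let Q1 : ProbabilityMeasure (S × A) := ⟨ρ ⊗ₘ κ, inferInstance⟩
    let Q2 : ProbabilityMeasure (S × B) := ⟨ρ ⊗ₘ η, inferInstance⟩
    have e : P = {f | f.map hg1.measurable.aemeasurable = Q1} ∩
        {f | f.map hg2.measurable.aemeasurable = Q2} := by
      ext f
      constructor
      · intro h
        exact ⟨Subtype.ext h.1, Subtype.ext h.2⟩
      · intro h
        exact ⟨congrArg Subtype.val h.1, congrArg Subtype.val h.2⟩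
    rw [e]
    exact (isClosed_eq h1 continuous_const).inter (isClosed_eq h2 continuous_const)
  have hPtight : IsTightMeasureSet {((μ : ProbabilityMeasure (S × (A × B))) :
      Measure (S × (A × B))) | μ ∈ P} := by
    have hS : IsTightMeasureSet {(ρ ⊗ₘ κ).fst} := isTightMeasureSet_singleton
    have hA : IsTightMeasureSet {(ρ ⊗ₘ κ).snd} := isTightMeasureSet_singleton
    have hB : IsTightMeasureSet {(ρ ⊗ₘ η).snd} := isTightMeasureSet_singleton
    refine IsTightMeasureSet.prodMk (hS.subset ?_) (IsTightMeasureSet.prodMk (hA.subset ?_)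
      (hB.subset ?_))
    · rintro _ ⟨_, ⟨f, hf, rfl⟩, rfl⟩
      rw [Set.mem_singleton_iff, ← hf.1, Measure.fst, Measure.fst,
        Measure.map_map measurable_fst hg1.measurable]
      rfl
    · rintro _ ⟨_, ⟨_, ⟨f, hf, rfl⟩, rfl⟩, rfl⟩
      rw [Set.mem_singleton_iff, ← hf.1, Measure.fst, Measure.snd, Measure.snd,
        Measure.map_map measurable_snd hg1.measurable, Measure.map_map measurable_fst measurable_snd]
      rfl
    · rintro _ ⟨_, ⟨_, ⟨f, hf, rfl⟩, rfl⟩, rfl⟩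
      rw [Set.mem_singleton_iff, ← hf.2, Measure.snd, Measure.snd, Measure.snd,
        Measure.map_map measurable_snd hg2.measurable, Measure.map_map measurable_snd measurable_snd]
      rfl
  have hPc : IsCompact P := by
    have := isCompact_closure_of_isTightMeasureSet hPtight
    rwa [hPclosed.closure_eq] at this
  let F : ℕ → ProbabilityMeasure (S × (A × B)) := fun n => ⟨ρ ⊗ₘ γ n, inferInstance⟩
  have hFP : ∀ n, F n ∈ P := fun n =>
    ⟨compProd_marginal ρ (γ n) κ measurable_fst fun s => (hγ1 n s).1,
      compProd_marginal ρ (γ n) η measurable_snd fun s => (hγ1 n s).2⟩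
  obtain ⟨f, hfP, φ, hφ, hlim⟩ := hPc.tendsto_subseq hFP
  refine ⟨f, inferInstance, hfP.1, hfP.2, ?_⟩
  set I := ∫⁻ s, Wc c (κ s) (η s) ∂ρ with hI
  have hFcost : ∀ n, ∫⁻ z, cn n z.2.1 z.2.2 ∂(F n : Measure (S × (A × B))) ≤
      I + ((n : ℝ≥0∞) + 1)⁻¹ := by
    intro n
    have hm : Measurable fun z : S × (A × B) => cn n z.2.1 z.2.2 :=
      (hcn n).measurable.comp measurable_snd
    change ∫⁻ z, cn n z.2.1 z.2.2 ∂(ρ ⊗ₘ γ n) ≤ _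
    rw [Measure.lintegral_compProd hm]
    calc _ ≤ ∫⁻ s, (Wc c (κ s) (η s) + ((n : ℝ≥0∞) + 1)⁻¹) ∂ρ :=
          lintegral_mono fun s => (hγ2 n s).trans (by gcongr; exact hWmono n _ _)
      _ = _ := by rw [lintegral_add_right _ measurable_const]; simp [hI]
  have hcnI : ∀ j, ∫⁻ z, cn j z.2.1 z.2.2 ∂(f : Measure (S × (A × B))) ≤ I := by
    intro j
    have hcont : Continuous fun z : S × (A × B) => (cn j z.2.1 z.2.2).toNNReal := by
      refine ENNReal.continuousOn_toNNReal.comp_continuous ((hcn j).comp continuous_snd) fun z => ?_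
      exact ne_top_of_le_ne_top (ENNReal.natCast_ne_top j) (hcnM j _ _)
    have hle : ∀ z : S × (A × B), (cn j z.2.1 z.2.2).toNNReal ≤ (j : NNReal) := fun z =>
      ENNReal.toNNReal_mono (ENNReal.natCast_ne_top j) (hcnM j z.2.1 z.2.2)
    let g : BoundedContinuousFunction (S × (A × B)) NNReal :=
      BoundedContinuousFunction.mkOfBound ⟨_, hcont⟩ j (fun x y => by
        rw [NNReal.dist_eq]
        exact abs_sub_le_of_nonneg_of_le (NNReal.coe_nonneg _) (by exact_mod_cast hle x)
          (NNReal.coe_nonneg _) (by exact_mod_cast hle y))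
    have hg : ∀ z, (g z : ℝ≥0∞) = cn j z.2.1 z.2.2 := fun z =>
      ENNReal.coe_toNNReal (ne_top_of_le_ne_top (ENNReal.natCast_ne_top j) (hcnM j _ _))
    have hl := (ProbabilityMeasure.tendsto_iff_forall_lintegral_tendsto.1 hlim) g
    simp only [hg] at hl
    have hl2 : Tendsto (fun k => I + ((φ k : ℝ≥0∞) + 1)⁻¹) atTop (𝓝 (I + 0)) := by
      refine Tendsto.const_add I ?_
      have h0 : Tendsto (fun n : ℕ => ((n : ℝ≥0∞) + 1)⁻¹) atTop (𝓝 0) := by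
        have := (tendsto_add_atTop_iff_nat 1).2 ENNReal.tendsto_inv_nat_nhds_zero
        simpa using this
      exact h0.comp hφ.tendsto_atTop
    rw [add_zero] at hl2
    refine le_of_tendsto_of_tendsto hl hl2 ?_
    filter_upwards [eventually_ge_atTop j] with k hk
    refine le_trans (lintegral_mono fun z => ?_) (hFcost (φ k))
    exact hcnmono _ _ (hk.trans (hφ.id_le k))
  have hsup : ∀ a b, c a b = ⨆ n, cn n a b := by
    intro a b
    have : ⨆ n : ℕ, c a b ⊓ (n : ℝ≥0∞) = c a b ⊓ ⨆ n : ℕ, (n : ℝ≥0∞) := (inf_iSup_eq _ _).symm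
    rw [ENNReal.iSup_natCast, inf_top_eq] at this
    exact this.symm
  simp_rw [hsup]
  rw [lintegral_iSup (f := fun n (z : S × (A × B)) => cn n z.2.1 z.2.2) (fun n => (hcn n).measurable.comp measurable_snd)
    (fun i j hij z => hcnmono _ _ hij)]
  exact iSup_le hcnI

lemma lower [StandardBorelSpace A] [StandardBorelSpace B]
    (ρ : Measure S) [IsProbabilityMeasure ρ]
    (κ : Kernel S A) (η : Kernel S B) [IsMarkovKernel κ] [IsMarkovKernel η]
    (c : A → B → ℝ≥0∞) (hc : Measurable fun z : A × B => c z.1 z.2)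
    (f : Measure (S × (A × B))) [IsProbabilityMeasure f]
    (h1 : f.map (fun z => (z.1, z.2.1)) = ρ ⊗ₘ κ) (h2 : f.map (fun z => (z.1, z.2.2)) = ρ ⊗ₘ η) :
    ∫⁻ s, Wc c (κ s) (η s) ∂ρ ≤ ∫⁻ z, c z.2.1 z.2.2 ∂f := by
  obtain ⟨z0⟩ : Nonempty (S × (A × B)) := f.nonempty_of_neZero
  have : Nonempty (A × B) := ⟨z0.2⟩
  have hfst : f.fst = ρ := by
    have : (ρ ⊗ₘ κ).fst = ρ := Measure.fst_compProd ρ κ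
    rw [← h1, Measure.fst, Measure.map_map measurable_fst (by fun_prop)] at this
    exact this
  have hdis : ρ ⊗ₘ f.condKernel = f := by
    rw [← hfst]
    exact f.disintegrate f.condKernel
  have e1 : (f.condKernel.map Prod.fst) =ᵐ[ρ] κ := by
    apply Kernel.ae_eq_of_compProd_eq
    rw [Measure.compProd_map measurable_fst, hdis, ← h1]
    rfl
  have e2 : (f.condKernel.map Prod.snd) =ᵐ[ρ] η := by
    apply Kernel.ae_eq_of_compProd_eq
    rw [Measure.compProd_map measurable_snd, hdis, ← h2]
    rfl
  have hcost : ∫⁻ z, c z.2.1 z.2.2 ∂f = ∫⁻ s, ∫⁻ z, c z.1 z.2 ∂(f.condKernel s) ∂ρ := by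
    conv_lhs => rw [← hdis]
    rw [Measure.lintegral_compProd (f := fun z : S × (A × B) => c z.2.1 z.2.2) (hc.comp measurable_snd)]
  rw [hcost]
  refine lintegral_mono_ae ?_
  filter_upwards [e1, e2] with s hs1 hs2
  refine iInf₂_le (f := fun (π : Measure (A × B)) (_ : π ∈ {π | IsCoupling π (κ s) (η s)}) =>
    ∫⁻ p, c p.1 p.2 ∂π) (f.condKernel s) ⟨?_, ?_⟩
  · rw [← hs1, Kernel.map_apply _ measurable_fst]
  · rw [← hs2, Kernel.map_apply _ measurable_snd]

lemma glue [StandardBorelSpace A] [StandardBorelSpace B]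
    (f1 : Measure (S × A)) (f2 : Measure (S × B)) [IsProbabilityMeasure f1]
    [IsProbabilityMeasure f2] (h : f1.map Prod.fst = f2.map Prod.fst) :
    ∃ f : Measure (S × (A × B)), f.map (fun z => (z.1, z.2.1)) = f1 ∧
      f.map (fun z => (z.1, z.2.2)) = f2 := by
  obtain ⟨z1⟩ : Nonempty (S × A) := f1.nonempty_of_neZero
  obtain ⟨z2⟩ : Nonempty (S × B) := f2.nonempty_of_neZero
  have : Nonempty A := ⟨z1.2⟩
  have : Nonempty B := ⟨z2.2⟩
  have h' : f1.fst = f2.fst := h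
  refine ⟨f1.fst ⊗ₘ (f1.condKernel ×ₖ f2.condKernel), ?_, ?_⟩
  · rw [compProd_marginal f1.fst _ f1.condKernel measurable_fst]
    · exact f1.disintegrate _
    · intro s
      rw [Kernel.prod_apply, Measure.map_fst_prod]
      simp
  · rw [compProd_marginal f1.fst _ f2.condKernel measurable_snd]
    · rw [h']
      exact f2.disintegrate _
    · intro s
      rw [Kernel.prod_apply, Measure.map_snd_prod]
      simp

lemma map_swap_of_eq {m : Measure (A × B)} {n : Measure (B × A)} (h : m = n.map Prod.swap) :
    m.map Prod.swap = n := by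
  rw [h, Measure.map_map measurable_swap measurable_swap]
  simp

lemma Wc_le_CT [StandardBorelSpace X₁] [StandardBorelSpace X₂]
    [StandardBorelSpace Y₁] [StandardBorelSpace Y₂]
    (μ : Measure (X₁ × X₂)) (ν : Measure (Y₁ × Y₂))
    (c₁ : X₁ → Y₁ → ℝ≥0∞) (c₂ : X₂ → Y₂ → ℝ≥0∞)
    (hc₁ : Measurable fun p : X₁ × Y₁ => c₁ p.1 p.2)
    (hc₂ : Measurable fun p : X₂ × Y₂ => c₂ p.1 p.2)
    (G : Measure ((X₁ × X₂) × Y₁) × Measure (X₂ × (Y₁ × Y₂))) (hG : G ∈ Flows μ ν) :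
    Wc (fun x y => c₁ x.1 y.1 + c₂ x.2 y.2) μ ν ≤ CT c₁ c₂ G := by
  obtain ⟨g1, g2⟩ := G
  obtain ⟨hp1, hp2, hm, hn, hz⟩ := hG
  simp only at hp1 hp2 hm hn hz
  have ht1 : Measurable fun p : (X₁ × X₂) × Y₁ => ((p.2, p.1.2), p.1.1) := by fun_prop
  have ht2 : Measurable fun p : X₂ × (Y₁ × Y₂) => ((p.2.1, p.1), p.2.2) := by fun_prop
  have i1 := Measure.isProbabilityMeasure_map (μ := g1) ht1.aemeasurable
  have i2 := Measure.isProbabilityMeasure_map (μ := g2) ht2.aemeasurable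
  obtain ⟨f, hf1, hf2⟩ := glue (g1.map fun p => ((p.2, p.1.2), p.1.1))
    (g2.map fun p => ((p.2.1, p.1), p.2.2)) (by
      rw [Measure.map_map measurable_fst ht1, Measure.map_map measurable_fst ht2]
      exact hz)
  have hq : Measurable fun z : (Y₁ × X₂) × (X₁ × Y₂) => ((z.2.1, z.1.2), (z.1.1, z.2.2)) := by
    fun_prop
  have hr1 : Measurable fun z : (Y₁ × X₂) × (X₁ × Y₂) => (z.1, z.2.1) := by fun_prop
  have hr2 : Measurable fun z : (Y₁ × X₂) × (X₁ × Y₂) => (z.1, z.2.2) := by fun_prop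
  have hcc1 : Measurable fun w : (Y₁ × X₂) × X₁ => c₁ w.2 w.1.1 :=
    hc₁.comp (measurable_snd.prodMk (measurable_fst.comp measurable_fst))
  have hcc2 : Measurable fun w : (Y₁ × X₂) × Y₂ => c₂ w.1.2 w.2 :=
    hc₂.comp ((measurable_snd.comp measurable_fst).prodMk measurable_snd)
  have hC : IsCoupling (f.map fun z => ((z.2.1, z.1.2), (z.1.1, z.2.2))) μ ν := by
    constructor
    · have := congrArg (Measure.map fun w : (Y₁ × X₂) × X₁ => (w.2, w.1.2)) hf1
      rw [Measure.map_map (by fun_prop) hr1, Measure.map_map (by fun_prop) ht1] at this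
      rw [Measure.map_map measurable_fst hq, ← hm]
      exact this
    · have := congrArg (Measure.map fun w : (Y₁ × X₂) × Y₂ => (w.1.1, w.2)) hf2
      rw [Measure.map_map (by fun_prop) hr2, Measure.map_map (by fun_prop) ht2] at this
      rw [Measure.map_map measurable_snd hq, ← hn]
      exact this
  have hle : Wc (fun x y => c₁ x.1 y.1 + c₂ x.2 y.2) μ ν ≤
      ∫⁻ p, (c₁ p.1.1 p.2.1 + c₂ p.1.2 p.2.2)
        ∂(f.map fun z => ((z.2.1, z.1.2), (z.1.1, z.2.2))) :=
    iInf₂_le (f := fun (π : Measure ((X₁ × X₂) × (Y₁ × Y₂)))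
      (_ : π ∈ {π | IsCoupling π μ ν}) => ∫⁻ p, (c₁ p.1.1 p.2.1 + c₂ p.1.2 p.2.2) ∂π) _ hC
  refine hle.trans (le_of_eq ?_)
  have hcost : Measurable fun p : (X₁ × X₂) × (Y₁ × Y₂) => c₁ p.1.1 p.2.1 + c₂ p.1.2 p.2.2 :=
    (hc₁.comp ((measurable_fst.comp measurable_fst).prodMk
      (measurable_fst.comp measurable_snd))).add
    (hc₂.comp ((measurable_snd.comp measurable_fst).prodMk (measurable_snd.comp measurable_snd)))
  rw [lintegral_map hcost hq]
  refine (lintegral_add_left (hcc1.comp hr1)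
    (fun z : (Y₁ × X₂) × (X₁ × Y₂) => c₂ z.1.2 z.2.2)).trans ?_
  unfold CT
  congr 1
  · have := lintegral_map (μ := f) hcc1 hr1
    rw [hf1, lintegral_map hcc1 ht1] at this
    exact this.symm
  · have := lintegral_map (μ := f) hcc2 hr2
    rw [hf2, lintegral_map hcc2 ht2] at this
    exact this.symm

lemma CT_le_Wc (μ : Measure (X₁ × X₂)) (ν : Measure (Y₁ × Y₂)) [IsProbabilityMeasure μ]
    (c₁ : X₁ → Y₁ → ℝ≥0∞) (c₂ : X₂ → Y₂ → ℝ≥0∞)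
    (hc₁ : Measurable fun p : X₁ × Y₁ => c₁ p.1 p.2)
    (hc₂ : Measurable fun p : X₂ × Y₂ => c₂ p.1 p.2) :
    ⨅ G ∈ Flows μ ν, CT c₁ c₂ G ≤ Wc (fun x y => c₁ x.1 y.1 + c₂ x.2 y.2) μ ν := by
  refine le_iInf₂ fun π hπ => ?_
  have hπ' : IsCoupling π μ ν := hπ
  have : IsProbabilityMeasure π := by
    constructor
    have := congrArg (fun μ => μ Set.univ) hπ'.1
    simpa [Measure.map_apply measurable_fst MeasurableSet.univ] using this
  have ht1 : Measurable fun p : (X₁ × X₂) × (Y₁ × Y₂) => (p.1, p.2.1) := by fun_prop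
  have ht2 : Measurable fun p : (X₁ × X₂) × (Y₁ × Y₂) => (p.1.2, p.2) := by fun_prop
  have hG : (π.map fun p => (p.1, p.2.1), π.map fun p => (p.1.2, p.2)) ∈ Flows μ ν := by
    refine ⟨Measure.isProbabilityMeasure_map ht1.aemeasurable,
      Measure.isProbabilityMeasure_map ht2.aemeasurable, ?_, ?_, ?_⟩
    · dsimp only
      rw [Measure.map_map measurable_fst ht1]
      exact hπ'.1
    · dsimp only
      rw [Measure.map_map measurable_snd ht2]
      exact hπ'.2
    · dsimp only
      rw [Measure.map_map (by fun_prop) ht1, Measure.map_map (by fun_prop) ht2]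
      rfl
  have hle : ⨅ G ∈ Flows μ ν, CT c₁ c₂ G ≤
      CT c₁ c₂ (π.map fun p => (p.1, p.2.1), π.map fun p => (p.1.2, p.2)) :=
    iInf₂_le (f := fun G (_ : G ∈ Flows μ ν) => CT c₁ c₂ G) _ hG
  refine hle.trans (le_of_eq ?_)
  · unfold CT
    dsimp only
    have h1 : Measurable fun q : (X₁ × X₂) × Y₁ => c₁ q.1.1 q.2 :=
      hc₁.comp ((measurable_fst.comp measurable_fst).prodMk measurable_snd)
    have h2 : Measurable fun q : X₂ × (Y₁ × Y₂) => c₂ q.1 q.2.2 :=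
      hc₂.comp (measurable_fst.prodMk (measurable_snd.comp measurable_snd))
    rw [lintegral_map h1 ht1, lintegral_map h2 ht2]
    exact (lintegral_add_left (h1.comp ht1) _).symm

end Stmt8Aux

theorem stmt8
    [TopologicalSpace X₁] [PolishSpace X₁] [BorelSpace X₁]
    [TopologicalSpace X₂] [PolishSpace X₂] [BorelSpace X₂]
    [TopologicalSpace Y₁] [PolishSpace Y₁] [BorelSpace Y₁]
    [TopologicalSpace Y₂] [PolishSpace Y₂] [BorelSpace Y₂]
    (μ : Measure (X₁ × X₂)) (ν : Measure (Y₁ × Y₂))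
    [IsProbabilityMeasure μ] [IsProbabilityMeasure ν]
    (c₁ : X₁ → Y₁ → ℝ≥0∞) (c₂ : X₂ → Y₂ → ℝ≥0∞)
    (hc₁ : Continuous fun p : X₁ × Y₁ => c₁ p.1 p.2)
    (hc₂ : Continuous fun p : X₂ × Y₂ => c₂ p.1 p.2)
    (ζ : Measure (Y₁ × X₂)) [IsProbabilityMeasure ζ]
    (hζ : IsPivot μ ν c₁ c₂ ζ)
    -- conditional laws (disintegrations) of μ, ζ, ν:
    (κμ : Kernel X₂ X₁) [IsMarkovKernel κμ]
    (hκμ : μ = ((μ.map Prod.snd) ⊗ₘ κμ).map Prod.swap)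
    (κζ₂ : Kernel X₂ Y₁) [IsMarkovKernel κζ₂]
    (hκζ₂ : ζ = ((μ.map Prod.snd) ⊗ₘ κζ₂).map Prod.swap)
    (κζ₁ : Kernel Y₁ X₂) [IsMarkovKernel κζ₁]
    (hκζ₁ : ζ = (ν.map Prod.fst) ⊗ₘ κζ₁)
    (κν : Kernel Y₁ Y₂) [IsMarkovKernel κν]
    (hκν : ν = (ν.map Prod.fst) ⊗ₘ κν) :
    Wc (fun x y => c₁ x.1 y.1 + c₂ x.2 y.2) μ ν
      = ∫⁻ x₂, Wc c₁ (κμ x₂) (κζ₂ x₂) ∂(μ.map Prod.snd)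
        + ∫⁻ y₁, Wc c₂ (κζ₁ y₁) (κν y₁) ∂(ν.map Prod.fst) := by
  have hm₁ := hc₁.measurable
  have hm₂ := hc₂.measurable
  have iμ : IsProbabilityMeasure (μ.map Prod.snd) :=
    Measure.isProbabilityMeasure_map measurable_snd.aemeasurable
  have iν : IsProbabilityMeasure (ν.map Prod.fst) :=
    Measure.isProbabilityMeasure_map measurable_fst.aemeasurable
  have hμs := Stmt8Aux.map_swap_of_eq hκμ
  have hζs := Stmt8Aux.map_swap_of_eq hκζ₂
  apply le_antisymm
  · obtain ⟨f1, hf1, h11, h12, h13⟩ := Stmt8Aux.key (μ.map Prod.snd) κμ κζ₂ c₁ hc₁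
    obtain ⟨f2, hf2, h21, h22, h23⟩ := Stmt8Aux.key (ν.map Prod.fst) κζ₁ κν c₂ hc₂
    have ht1 : Measurable fun z : X₂ × (X₁ × Y₁) => ((z.2.1, z.1), z.2.2) := by fun_prop
    have ht2 : Measurable fun z : Y₁ × (X₂ × Y₂) => (z.2.1, (z.1, z.2.2)) := by fun_prop
    have hG : (f1.map (fun z => ((z.2.1, z.1), z.2.2)), f2.map fun z => (z.2.1, (z.1, z.2.2))) ∈
        Flows μ ν := by
      refine ⟨Measure.isProbabilityMeasure_map ht1.aemeasurable,
        Measure.isProbabilityMeasure_map ht2.aemeasurable, ?_, ?_, ?_⟩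
      · rw [Measure.map_map measurable_fst ht1]
        rw [← h11, Measure.map_map measurable_swap (by fun_prop)] at hκμ
        exact hκμ.symm
      · rw [Measure.map_map measurable_snd ht2]
        rw [← h22] at hκν
        exact hκν.symm
      · rw [Measure.map_map (by fun_prop) ht1, Measure.map_map (by fun_prop) ht2]
        rw [← h12, Measure.map_map measurable_swap (by fun_prop)] at hκζ₂
        rw [← h21] at hκζ₁
        exact hκζ₂.symm.trans hκζ₁
    refine (Stmt8Aux.Wc_le_CT μ ν c₁ c₂ hm₁ hm₂ _ hG).trans ?_
    unfold CT
    have h1 : Measurable fun q : (X₁ × X₂) × Y₁ => c₁ q.1.1 q.2 :=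
      hm₁.comp ((measurable_fst.comp measurable_fst).prodMk measurable_snd)
    have h2 : Measurable fun q : X₂ × (Y₁ × Y₂) => c₂ q.1 q.2.2 :=
      hm₂.comp (measurable_fst.prodMk (measurable_snd.comp measurable_snd))
    rw [lintegral_map h1 ht1, lintegral_map h2 ht2]
    exact add_le_add h13 h23
  · obtain ⟨⟨g1, g2⟩, hF, hFζ, hFopt⟩ := hζ
    refine le_trans ?_ (Stmt8Aux.CT_le_Wc μ ν c₁ c₂ hm₁ hm₂)
    rw [← hFopt]
    obtain ⟨hp1, hp2, hm, hn, hz⟩ := hF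
    simp only at hp1 hp2 hm hn hz hFζ
    rw [hFζ] at hz
    have ht1 : Measurable fun p : (X₁ × X₂) × Y₁ => (p.1.2, (p.1.1, p.2)) := by fun_prop
    have ht2 : Measurable fun p : X₂ × (Y₁ × Y₂) => (p.2.1, (p.1, p.2.2)) := by fun_prop
    have i1 := Measure.isProbabilityMeasure_map (μ := g1) ht1.aemeasurable
    have i2 := Measure.isProbabilityMeasure_map (μ := g2) ht2.aemeasurable
    have L1 := Stmt8Aux.lower (μ.map Prod.snd) κμ κζ₂ c₁ hm₁ (g1.map fun p => (p.1.2, (p.1.1, p.2)))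
      (by
        rw [Measure.map_map (by fun_prop) ht1, ← hμs]
        conv_rhs => rw [← hm, Measure.map_map measurable_swap measurable_fst]
        rfl)
      (by
        rw [Measure.map_map (by fun_prop) ht1, ← hζs, ← hFζ,
          Measure.map_map measurable_swap (by fun_prop)]
        rfl)
    have L2 := Stmt8Aux.lower (ν.map Prod.fst) κζ₁ κν c₂ hm₂ (g2.map fun p => (p.2.1, (p.1, p.2.2)))
      (by
        rw [Measure.map_map (by fun_prop) ht2, ← hκζ₁, hz]
        rfl)
      (by
        rw [Measure.map_map (by fun_prop) ht2, ← hκν, ← hn]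
        rfl)
    rw [lintegral_map (f := fun z : X₂ × (X₁ × Y₁) => c₁ z.2.1 z.2.2)
      (hm₁.comp measurable_snd) ht1] at L1
    rw [lintegral_map (f := fun z : Y₁ × (X₂ × Y₂) => c₂ z.2.1 z.2.2)
      (hm₂.comp measurable_snd) ht2] at L2
    exact add_le_add L1 L2
end
end

section
/- Define the pivoting functional Z(ζ) = ∫_{X₂} W_{c₁}(μ_{|x₂}, ζ_{|x₂}) dμ₂ + ∫_{Y₁} W_{c₂}(ζ_{|y₁}, ν_{|y₁}) dν₁ on intermedium measures ζ ∈ I(μ,ν). Then W_c(μ,ν) = inf_{ζ ∈ I(μ,ν)} Z(ζ). -/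
open MeasureTheory ProbabilityTheory
open scoped ENNReal ProbabilityTheory

noncomputable section

variable {X₁ X₂ Y₁ Y₂ : Type*} [MeasurableSpace X₁] [MeasurableSpace X₂]
  [MeasurableSpace Y₁] [MeasurableSpace Y₂]

/-- The pivoting functional `Z` on intermedium measures, via conditional laws. -/
noncomputable def Zfun (μ ν ζ : Measure (ℝ × ℝ))
    [IsFiniteMeasure μ] [IsFiniteMeasure ν] [IsFiniteMeasure ζ]
    (c₁ c₂ : ℝ → ℝ → ℝ≥0∞) : ℝ≥0∞ :=
  haveI : IsFiniteMeasure (μ.map Prod.swap) := Measure.isFiniteMeasure_map μ _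
  haveI : IsFiniteMeasure (ζ.map Prod.swap) := Measure.isFiniteMeasure_map ζ _
  ∫⁻ x₂, Wc c₁ ((μ.map Prod.swap).condKernel x₂) ((ζ.map Prod.swap).condKernel x₂)
      ∂(μ.map Prod.snd)
    + ∫⁻ y₁, Wc c₂ (ζ.condKernel y₁) (ν.condKernel y₁) ∂(ν.map Prod.fst)

open scoped NNReal

/-- The sub-coupling. -/
def subC {ι : Type*} [Fintype ι] (p q : ι → ℝ) (R : ι → ι → ℝ≥0) (i j : ι) : ℝ :=
  (R i j : ℝ) * (p i / max (∑ k, (R i k : ℝ)) (p i)) * (q j / max (∑ k, (R k j : ℝ)) (q j))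

/-- The corrected coupling. -/
def modC {ι : Type*} [Fintype ι] (p q : ι → ℝ) (R : ι → ι → ℝ≥0) (i j : ι) : ℝ :=
  subC p q R i j + (p i - ∑ k, subC p q R i k) * (q j - ∑ k, subC p q R k j) /
    (1 - ∑ k, ∑ l, subC p q R k l)

lemma subC_nonneg {ι : Type*} [Fintype ι] {p q : ι → ℝ} (hp : ∀ i, 0 ≤ p i) (hq : ∀ i, 0 ≤ q i)
    (R : ι → ι → ℝ≥0)
    (i j : ι) : 0 ≤ subC p q R i j := by
  unfold subC
  have := hp i
  have := hq j
  positivity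

lemma subC_row {ι : Type*} [Fintype ι] {p q : ι → ℝ} (hp : ∀ i, 0 ≤ p i) (hq : ∀ i, 0 ≤ q i)
    (R : ι → ι → ℝ≥0)
    (i : ι) : ∑ k, subC p q R i k ≤ p i := by
  have h1 : ∀ k, subC p q R i k ≤ (R i k : ℝ) * (p i / max (∑ k, (R i k : ℝ)) (p i)) := by
    intro k
    unfold subC
    have := hp i
    apply mul_le_of_le_one_right (by positivity)
    exact div_le_one_of_le₀ (le_max_right _ _) (le_max_of_le_right (hq k))
  refine (Finset.sum_le_sum fun k _ => h1 k).trans ?_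
  rw [← Finset.sum_mul, ← mul_div_assoc, mul_comm, mul_div_assoc]
  apply mul_le_of_le_one_right (hp i)
  exact div_le_one_of_le₀ (le_max_left _ _) (le_max_of_le_right (hp i))

lemma subC_col {ι : Type*} [Fintype ι] {p q : ι → ℝ} (hp : ∀ i, 0 ≤ p i) (hq : ∀ i, 0 ≤ q i)
    (R : ι → ι → ℝ≥0)
    (j : ι) : ∑ k, subC p q R k j ≤ q j := by
  have h1 : ∀ k, subC p q R k j ≤ (R k j : ℝ) * (q j / max (∑ k, (R k j : ℝ)) (q j)) := by
    intro k
    unfold subC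
    have := hq j
    rw [mul_right_comm]
    apply mul_le_of_le_one_right (by positivity)
    exact div_le_one_of_le₀ (le_max_right _ _) (le_max_of_le_right (hp k))
  refine (Finset.sum_le_sum fun k _ => h1 k).trans ?_
  rw [← Finset.sum_mul, ← mul_div_assoc, mul_comm, mul_div_assoc]
  apply mul_le_of_le_one_right (hq j)
  exact div_le_one_of_le₀ (le_max_left _ _) (le_max_of_le_right (hq j))

lemma subC_mass {ι : Type*} [Fintype ι] {p q : ι → ℝ} (hp : ∀ i, 0 ≤ p i) (hq : ∀ i, 0 ≤ q i)
    (hp1 : ∑ i, p i = 1) (R : ι → ι → ℝ≥0)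
    : 1 - ∑ k, ∑ l, subC p q R k l = ∑ i, (p i - ∑ k, subC p q R i k) := by
  rw [Finset.sum_sub_distrib, hp1]

lemma subC_mass' {ι : Type*} [Fintype ι] {p q : ι → ℝ} (hp : ∀ i, 0 ≤ p i) (hq : ∀ i, 0 ≤ q i)
    (hq1 : ∑ i, q i = 1) (R : ι → ι → ℝ≥0)
    : 1 - ∑ k, ∑ l, subC p q R k l = ∑ j, (q j - ∑ k, subC p q R k j) := by
  rw [Finset.sum_sub_distrib, hq1, Finset.sum_comm]


lemma subC_mass_nonneg {ι : Type*} [Fintype ι] {p q : ι → ℝ} (hp : ∀ i, 0 ≤ p i) (hq : ∀ i, 0 ≤ q i)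
    (hp1 : ∑ i, p i = 1) (hq1 : ∑ i, q i = 1) (R : ι → ι → ℝ≥0)
    : 0 ≤ 1 - ∑ k, ∑ l, subC p q R k l := by
  rw [subC_mass hp hq hp1]
  exact Finset.sum_nonneg fun i _ => sub_nonneg.2 (subC_row hp hq R i)

lemma modC_nonneg {ι : Type*} [Fintype ι] {p q : ι → ℝ} (hp : ∀ i, 0 ≤ p i) (hq : ∀ i, 0 ≤ q i)
    (hp1 : ∑ i, p i = 1) (hq1 : ∑ i, q i = 1) (R : ι → ι → ℝ≥0)
    (i j : ι) : 0 ≤ modC p q R i j := by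
  unfold modC
  have h1 := subC_nonneg hp hq R i j
  have h2 := sub_nonneg.2 (subC_row hp hq R i)
  have h3 := sub_nonneg.2 (subC_col hp hq R j)
  have h4 := subC_mass_nonneg hp hq hp1 hq1 R
  positivity

lemma modC_row {ι : Type*} [Fintype ι] {p q : ι → ℝ} (hp : ∀ i, 0 ≤ p i) (hq : ∀ i, 0 ≤ q i)
    (hp1 : ∑ i, p i = 1) (hq1 : ∑ i, q i = 1) (R : ι → ι → ℝ≥0)
    (i : ι) : ∑ j, modC p q R i j = p i := by
  unfold modC
  rw [Finset.sum_add_distrib, ← Finset.sum_div, ← Finset.mul_sum, ← subC_mass' hp hq hq1]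
  by_cases h : 1 - ∑ k, ∑ l, subC p q R k l = 0
  · have h' := h
    rw [subC_mass hp hq hp1, Finset.sum_eq_zero_iff_of_nonneg
      (fun i _ => sub_nonneg.2 (subC_row hp hq R i))] at h'
    have := h' i (Finset.mem_univ _)
    rw [this, h]; simp; linarith
  · rw [mul_div_assoc, div_self h]; ring

lemma modC_col {ι : Type*} [Fintype ι] {p q : ι → ℝ} (hp : ∀ i, 0 ≤ p i) (hq : ∀ i, 0 ≤ q i)
    (hp1 : ∑ i, p i = 1) (hq1 : ∑ i, q i = 1) (R : ι → ι → ℝ≥0)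
    (j : ι) : ∑ i, modC p q R i j = q j := by
  unfold modC
  rw [Finset.sum_add_distrib, ← Finset.sum_div, ← Finset.sum_mul, ← subC_mass hp hq hp1]
  by_cases h : 1 - ∑ k, ∑ l, subC p q R k l = 0
  · have h' := h
    rw [subC_mass' hp hq hq1, Finset.sum_eq_zero_iff_of_nonneg
      (fun i _ => sub_nonneg.2 (subC_col hp hq R i))] at h'
    have := h' j (Finset.mem_univ _)
    rw [this, h]; simp; linarith
  · rw [mul_comm, mul_div_assoc, div_self h]; ring

lemma subC_continuous {ι : Type*} [Fintype ι] {p q : ι → ℝ} (hp : ∀ i, 0 ≤ p i) (hq : ∀ i, 0 ≤ q i)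
    (i j : ι) : Continuous fun R => subC p q R i j := by
  unfold subC
  rcases (hp i).eq_or_lt with h | h
  · simp [← h, continuous_const]
  rcases (hq j).eq_or_lt with h' | h'
  · simp [← h', continuous_const]
  have e1 : ∀ R : ι → ι → ℝ≥0, max (∑ k, (R i k : ℝ)) (p i) ≠ 0 := fun R =>
    (lt_of_lt_of_le h (le_max_right _ _)).ne'
  have e2 : ∀ R : ι → ι → ℝ≥0, max (∑ k, (R k j : ℝ)) (q j) ≠ 0 := fun R =>
    (lt_of_lt_of_le h' (le_max_right _ _)).ne'
  fun_prop (disch := assumption)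

lemma subC_self {ι : Type*} [Fintype ι] {p q : ι → ℝ} (hp : ∀ i, 0 ≤ p i) (hq : ∀ i, 0 ≤ q i)
    (R : ι → ι → ℝ≥0)
    (hr : ∀ i, ∑ j, (R i j : ℝ) = p i) (hs : ∀ j, ∑ i, (R i j : ℝ) = q j) (i j : ι) :
    subC p q R i j = R i j := by
  unfold subC
  rw [hr, hs, max_self, max_self]
  by_cases h : p i = 0
  · have := hr i
    rw [h, Finset.sum_eq_zero_iff_of_nonneg (fun _ _ => NNReal.coe_nonneg _)] at this
    simp [this j (Finset.mem_univ _)]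
  by_cases h' : q j = 0
  · have := hs j
    rw [h', Finset.sum_eq_zero_iff_of_nonneg (fun _ _ => NNReal.coe_nonneg _)] at this
    simp [this i (Finset.mem_univ _)]
  rw [div_self h, div_self h']; simp

lemma modC_tendsto {ι : Type*} [Fintype ι] {p q : ι → ℝ} (hp : ∀ i, 0 ≤ p i) (hq : ∀ i, 0 ≤ q i)
    (hp1 : ∑ i, p i = 1) (hq1 : ∑ i, q i = 1) (R : ι → ι → ℝ≥0)
    (hr : ∀ i, ∑ j, (R i j : ℝ) = p i) (hs : ∀ j, ∑ i, (R i j : ℝ) = q j) (i j : ι) :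
    Filter.Tendsto (fun R' => modC p q R' i j) (nhds R) (nhds (R i j : ℝ)) := by
  have hsub : ∀ i j, Filter.Tendsto (fun R' => subC p q R' i j) (nhds R) (nhds (R i j : ℝ)) := by
    intro i j
    have := (subC_continuous hp hq i j).tendsto R
    rwa [subC_self hp hq R hr hs] at this
  have hrow : Filter.Tendsto (fun R' => p i - ∑ k, subC p q R' i k) (nhds R) (nhds 0) := by
    have := (tendsto_const_nhds (x := p i)).sub
      (tendsto_finsetSum Finset.univ (fun k _ => hsub i k))
    simpa [hr] using this
  have hrem : Filter.Tendsto (fun R' => (p i - ∑ k, subC p q R' i k) *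
      (q j - ∑ k, subC p q R' k j) / (1 - ∑ k, ∑ l, subC p q R' k l)) (nhds R) (nhds 0) := by
    refine tendsto_of_tendsto_of_tendsto_of_le_of_le tendsto_const_nhds hrow ?_ ?_
    · intro R'
      have h2 := sub_nonneg.2 (subC_row hp hq R' i)
      have h3 := sub_nonneg.2 (subC_col hp hq R' j)
      have h4 := subC_mass_nonneg hp hq hp1 hq1 R'
      dsimp only
      positivity
    · intro R'
      dsimp only
      rw [mul_div_assoc]
      apply mul_le_of_le_one_right (sub_nonneg.2 (subC_row hp hq R' i))
      refine div_le_one_of_le₀ ?_ (subC_mass_nonneg hp hq hp1 hq1 R')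
      rw [subC_mass' hp hq hq1]
      exact Finset.single_le_sum (f := fun j => q j - ∑ k, subC p q R' k j)
        (fun i _ => sub_nonneg.2 (subC_col hp hq R' i)) (Finset.mem_univ j)
  simpa [modC] using (hsub i j).add hrem

/-- Measurable selection of near optimal couplings on a finite set. -/
lemma exists_selection {ι X : Type*} [Fintype ι] [MeasurableSpace X] (p q : X → ι → ℝ)
    (mp : ∀ i, Measurable fun x => p x i) (mq : ∀ i, Measurable fun x => q x i)
    (hp : ∀ x i, 0 ≤ p x i) (hq : ∀ x i, 0 ≤ q x i)
    (hp1 : ∀ x, ∑ i, p x i = 1) (hq1 : ∀ x, ∑ i, q x i = 1) (d : ι → ι → ℝ≥0) {ε : ℝ}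
    (hε : 0 < ε) : ∃ S : X → ι → ι → ℝ, (∀ i j, Measurable fun x => S x i j) ∧
      (∀ x i j, 0 ≤ S x i j) ∧ (∀ x i, ∑ j, S x i j = p x i) ∧ (∀ x j, ∑ i, S x i j = q x j) ∧
      ∀ x (R : ι → ι → ℝ≥0), (∀ i, ∑ j, (R i j : ℝ) = p x i) → (∀ j, ∑ i, (R i j : ℝ) = q x j) →
        ∑ i, ∑ j, S x i j * d i j ≤ ∑ i, ∑ j, (R i j : ℝ) * d i j + ε := by
  classical
  let Q : ℕ → ι → ι → ℝ≥0 := TopologicalSpace.denseSeq (ι → ι → ℝ≥0)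
  let f : ℕ → X → ℝ := fun k x => ∑ i, ∑ j, modC (p x) (q x) (Q k) i j * d i j
  have mmod : ∀ k i j, Measurable fun x => modC (p x) (q x) (Q k) i j := by
    intro k i j
    unfold modC subC
    fun_prop
  have mf : ∀ k, Measurable (f k) := by
    intro k
    have := mmod k
    fun_prop
  have hf0 : ∀ k x, 0 ≤ f k x := by
    intro k x
    refine Finset.sum_nonneg fun i _ => Finset.sum_nonneg fun j _ => mul_nonneg ?_ (NNReal.coe_nonneg _)
    exact modC_nonneg (hp x) (hq x) (hp1 x) (hq1 x) _ _ _
  have hex : ∀ x, ∃ k, ∀ l, f k x ≤ f l x + ε / 2 := by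
    intro x
    have hb : BddBelow (Set.range fun k => f k x) := ⟨0, by rintro _ ⟨k, rfl⟩; exact hf0 k x⟩
    obtain ⟨k, hk⟩ := exists_lt_of_ciInf_lt (f := fun k => f k x)
      (show ⨅ k, f k x < (⨅ k, f k x) + ε / 2 by linarith)
    refine ⟨k, fun l => ?_⟩
    have := ciInf_le hb l
    linarith
  refine ⟨fun x => modC (p x) (q x) (Q (Nat.find (hex x))), ?_, ?_, ?_, ?_, ?_⟩
  · intro i j
    refine Measurable.find (f := fun k x => modC (p x) (q x) (Q k) i j) (fun k => mmod k i j)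
      ?_ hex
    intro k
    simp only [Set.ofPred_forall]
    exact MeasurableSet.iInter fun l => measurableSet_le (mf k) ((mf l).add_const _)
  · exact fun x i j => modC_nonneg (hp x) (hq x) (hp1 x) (hq1 x) _ _ _
  · exact fun x i => modC_row (hp x) (hq x) (hp1 x) (hq1 x) _ _
  · exact fun x i => modC_col (hp x) (hq x) (hp1 x) (hq1 x) _ _
  · intro x R hr hs
    have ht : Filter.Tendsto (fun R' => ∑ i, ∑ j, modC (p x) (q x) R' i j * d i j) (nhds R)
        (nhds (∑ i, ∑ j, (R i j : ℝ) * d i j)) := by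
      refine tendsto_finsetSum _ fun i _ => tendsto_finsetSum _ fun j _ => ?_
      exact (modC_tendsto (hp x) (hq x) (hp1 x) (hq1 x) R hr hs i j).mul_const _
    have hev := ht.eventually (gt_mem_nhds
      (show ∑ i, ∑ j, (R i j : ℝ) * d i j < ∑ i, ∑ j, (R i j : ℝ) * d i j + ε / 2 by linarith))
    obtain ⟨U, hU, hUo, hRU⟩ := eventually_nhds_iff.1 hev
    obtain ⟨_, hyU, l, rfl⟩ := (TopologicalSpace.denseRange_denseSeq (ι → ι → ℝ≥0)).exists_mem_open hUo ⟨R, hRU⟩ |>.elim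
      fun l hl => (⟨_, hl, l, rfl⟩ : ∃ y, y ∈ U ∧ ∃ l, y = TopologicalSpace.denseSeq (ι → ι → ℝ≥0) l)
    have h1 := hU _ hyU
    have h2 := Nat.find_spec (hex x) l
    have h3 : f l x < ∑ i, ∑ j, (R i j : ℝ) * d i j + ε / 2 := h1
    have h4 : f (Nat.find (hex x)) x ≤ ∑ i, ∑ j, (R i j : ℝ) * d i j + ε := by linarith
    exact h4

lemma lintegral_cell {ι Ω : Type*} [Fintype ι] [MeasurableSpace ι] [MeasurableSingletonClass ι]
    [MeasurableSpace Ω] (β : Measure Ω) {t : Ω → ι} (ht : Measurable t) (F : ι → ℝ≥0∞) :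
    ∫⁻ b, F (t b) ∂β = ∑ j, F j * β (t ⁻¹' {j}) := by
  have : Measurable F := measurable_of_countable F
  rw [← lintegral_map this ht, lintegral_fintype]
  refine Finset.sum_congr rfl fun j _ => ?_
  rw [Measure.map_apply ht (measurableSet_singleton j)]

lemma sum_cell {ι Ω : Type*} [Fintype ι] [MeasurableSpace ι] [MeasurableSingletonClass ι]
    [MeasurableSpace Ω] (β : Measure Ω) [IsProbabilityMeasure β] {t : Ω → ι} (ht : Measurable t) :
    ∑ j, β.real (t ⁻¹' {j}) = 1 := by
  have := lintegral_cell β ht (fun _ => 1)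
  simp only [lintegral_one, measure_univ, one_mul] at this
  simp only [Measure.real]
  rw [← ENNReal.toReal_sum (fun _ _ => measure_ne_top _ _), ← this]; simp

lemma sum_inter_cell {ι Ω : Type*} [Fintype ι] [MeasurableSpace ι] [MeasurableSingletonClass ι]
    [MeasurableSpace Ω] (β : Measure Ω) (A : Set Ω) {t : Ω → ι} (ht : Measurable t) :
    ∑ j, β (A ∩ t ⁻¹' {j}) = β A := by
  have := lintegral_cell (β.restrict A) ht (fun _ => 1)
  simp only [lintegral_one, one_mul, Measure.restrict_apply_univ] at this
  rw [this]
  refine Finset.sum_congr rfl fun j _ => ?_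
  rw [Measure.restrict_apply (ht (measurableSet_singleton j)), Set.inter_comm]

/-- density of the lifted coupling -/
def liftD {ι Ω Ω' : Type*} (t : Ω → ι) (t' : Ω' → ι) (p q : ι → ℝ) (S : ι → ι → ℝ)
    (w : Ω × Ω') : ℝ≥0∞ :=
  ENNReal.ofReal (S (t w.1) (t' w.2) / (p (t w.1) * q (t' w.2)))

lemma ae_cell_ne {ι Ω : Type*} [Fintype ι] [MeasurableSpace ι] [MeasurableSingletonClass ι]
    [MeasurableSpace Ω] (α : Measure Ω) [IsProbabilityMeasure α] {t : Ω → ι} (ht : Measurable t)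
    : ∀ᵐ a ∂α, α.real (t ⁻¹' {t a}) ≠ 0 := by
  have : ∀ᵐ a ∂α, ∀ i, α.real (t ⁻¹' {i}) = 0 → t a ≠ i := by
    rw [ae_all_iff]
    intro i
    by_cases h : α.real (t ⁻¹' {i}) = 0
    · simp only [h, true_imp_iff]
      rw [measureReal_eq_zero_iff] at h
      rw [ae_iff]
      simpa [Set.preimage] using h
    · simp [h]
  filter_upwards [this] with a ha h
  exact ha _ h rfl

lemma measurable_liftD {ι Ω Ω' : Type*} [Fintype ι] [MeasurableSpace ι] [MeasurableSingletonClass ι]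
    [MeasurableSpace Ω] [MeasurableSpace Ω'] {t : Ω → ι} (ht : Measurable t) {t' : Ω' → ι} (ht' : Measurable t') {S : ι → ι → ℝ}
    (p q : ι → ℝ) : Measurable (liftD t t' p q S) := by
  have : Measurable fun z : ι × ι => ENNReal.ofReal (S z.1 z.2 / (p z.1 * q z.2)) :=
    measurable_of_countable _
  exact this.comp ((ht.comp measurable_fst).prodMk (ht'.comp measurable_snd))

lemma lift_inner {ι Ω Ω' : Type*} [Fintype ι] [MeasurableSpace ι] [MeasurableSingletonClass ι]
    [MeasurableSpace Ω] [MeasurableSpace Ω'] (α : Measure Ω) (β : Measure Ω')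
    [IsProbabilityMeasure α] [IsProbabilityMeasure β] {t : Ω → ι} {t' : Ω' → ι} (ht' : Measurable t') {S : ι → ι → ℝ} (hS : ∀ i j, 0 ≤ S i j)
    (hr : ∀ i, ∑ j, S i j = α.real (t ⁻¹' {i}))
    (hs : ∀ j, ∑ i, S i j = β.real (t' ⁻¹' {j})) (a : Ω) (ha : α.real (t ⁻¹' {t a}) ≠ 0) :
    ∫⁻ b, liftD t t' (fun i => α.real (t ⁻¹' {i})) (fun j => β.real (t' ⁻¹' {j})) S (a, b) ∂β
      = 1 := by
  unfold liftD
  dsimp only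
  rw [lintegral_cell β ht' (fun j => ENNReal.ofReal (S (t a) j /
    (α.real (t ⁻¹' {t a}) * β.real (t' ⁻¹' {j}))))]
  have key : ∀ j, ENNReal.ofReal (S (t a) j / (α.real (t ⁻¹' {t a}) * β.real (t' ⁻¹' {j}))) *
      β (t' ⁻¹' {j}) = ENNReal.ofReal (S (t a) j / α.real (t ⁻¹' {t a})) := by
    intro j
    rw [← ofReal_measureReal (μ := β) (s := t' ⁻¹' {j}), ← ENNReal.ofReal_mul (by
      have := hS (t a) j
      positivity)]
    congr 1
    by_cases h : β.real (t' ⁻¹' {j}) = 0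
    · have := hs j
      rw [h, Finset.sum_eq_zero_iff_of_nonneg (fun i _ => hS i j)] at this
      simp [this (t a) (Finset.mem_univ _)]
    · field_simp
  simp_rw [key]
  rw [← ENNReal.ofReal_sum_of_nonneg (fun j _ => div_nonneg (hS _ _) measureReal_nonneg),
    ← Finset.sum_div, hr, div_self ha, ENNReal.ofReal_one]

lemma lift_fst {ι Ω Ω' : Type*} [Fintype ι] [MeasurableSpace ι] [MeasurableSingletonClass ι]
    [MeasurableSpace Ω] [MeasurableSpace Ω'] (α : Measure Ω) (β : Measure Ω')
    [IsProbabilityMeasure α] [IsProbabilityMeasure β] {t : Ω → ι} (ht : Measurable t) {t' : Ω' → ι} (ht' : Measurable t') {S : ι → ι → ℝ} (hS : ∀ i j, 0 ≤ S i j)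
    (hr : ∀ i, ∑ j, S i j = α.real (t ⁻¹' {i}))
    (hs : ∀ j, ∑ i, S i j = β.real (t' ⁻¹' {j})) :
    ((α.prod β).withDensity
      (liftD t t' (fun i => α.real (t ⁻¹' {i})) (fun j => β.real (t' ⁻¹' {j})) S)).map Prod.fst
      = α := by
  have hm := measurable_liftD (S := S) ht ht' (fun i => α.real (t ⁻¹' {i}))
    (fun j => β.real (t' ⁻¹' {j}))
  ext A hA
  rw [Measure.map_apply measurable_fst hA, withDensity_apply _ (measurable_fst hA),
    show (Prod.fst ⁻¹' A : Set (Ω × Ω')) = A ×ˢ Set.univ by ext; simp,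
    ← Measure.prod_restrict, Measure.restrict_univ, lintegral_prod _ hm.aemeasurable,
    ← setLIntegral_one]
  refine lintegral_congr_ae (ae_restrict_of_ae ?_)
  filter_upwards [ae_cell_ne α ht] with a ha
  exact lift_inner α β ht' hS hr hs a ha

lemma lift_coupling {ι Ω Ω' : Type*} [Fintype ι] [MeasurableSpace ι] [MeasurableSingletonClass ι]
    [MeasurableSpace Ω] [MeasurableSpace Ω'] (α : Measure Ω) (β : Measure Ω')
    [IsProbabilityMeasure α] [IsProbabilityMeasure β] {t : Ω → ι} (ht : Measurable t) {t' : Ω' → ι} (ht' : Measurable t') {S : ι → ι → ℝ} (hS : ∀ i j, 0 ≤ S i j)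
    (hr : ∀ i, ∑ j, S i j = α.real (t ⁻¹' {i}))
    (hs : ∀ j, ∑ i, S i j = β.real (t' ⁻¹' {j})) :
    IsCoupling ((α.prod β).withDensity
      (liftD t t' (fun i => α.real (t ⁻¹' {i})) (fun j => β.real (t' ⁻¹' {j})) S)) α β := by
  refine ⟨lift_fst α β ht ht' hS hr hs, ?_⟩
  have h := lift_fst β α ht' ht (S := fun i j => S j i) (fun i j => hS j i) hs hr
  conv_rhs => rw [← h]
  have hm := measurable_liftD (S := S) ht ht' (fun i => α.real (t ⁻¹' {i}))
    (fun j => β.real (t' ⁻¹' {j}))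
  have hm2 := measurable_liftD (S := fun i j => S j i) ht' ht (fun i => β.real (t' ⁻¹' {i}))
    (fun j => α.real (t ⁻¹' {j}))
  ext A hA
  rw [Measure.map_apply measurable_snd hA, withDensity_apply _ (measurable_snd hA),
    Measure.map_apply measurable_fst hA, withDensity_apply _ (measurable_fst hA),
    ← Measure.prod_swap (μ := α) (ν := β), setLIntegral_map (measurable_fst hA) hm2 measurable_swap]
  refine lintegral_congr fun w => ?_
  simp only [liftD, Prod.fst_swap, Prod.snd_swap]
  rw [mul_comm]

lemma lift_cost {ι Ω Ω' : Type*} [Fintype ι] [MeasurableSpace ι] [MeasurableSingletonClass ι]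
    [MeasurableSpace Ω] [MeasurableSpace Ω'] (α : Measure Ω) (β : Measure Ω')
    [IsProbabilityMeasure α] [IsProbabilityMeasure β] {t : Ω → ι} (ht : Measurable t) {t' : Ω' → ι} (ht' : Measurable t') {S : ι → ι → ℝ} (hS : ∀ i j, 0 ≤ S i j)
    (d : ι → ι → ℝ≥0) :
    ∫⁻ w, (d (t w.1) (t' w.2) : ℝ≥0∞) ∂((α.prod β).withDensity
      (liftD t t' (fun i => α.real (t ⁻¹' {i})) (fun j => β.real (t' ⁻¹' {j})) S)) ≤
      ENNReal.ofReal (∑ i, ∑ j, S i j * d i j) := by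
  have hm := measurable_liftD (S := S) ht ht' (fun i => α.real (t ⁻¹' {i}))
    (fun j => β.real (t' ⁻¹' {j}))
  have hd : Measurable fun w : Ω × Ω' => (d (t w.1) (t' w.2) : ℝ≥0∞) := by
    have : Measurable fun z : ι × ι => (d z.1 z.2 : ℝ≥0∞) := measurable_of_countable _
    exact this.comp ((ht.comp measurable_fst).prodMk (ht'.comp measurable_snd))
  rw [lintegral_withDensity_eq_lintegral_mul _ hm hd, lintegral_prod _ (hm.mul hd).aemeasurable]
  simp only [Pi.mul_apply, liftD]
  let G : ι → ι → ℝ≥0∞ := fun i j => ENNReal.ofReal (S i j /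
    (α.real (t ⁻¹' {i}) * β.real (t' ⁻¹' {j}))) * d i j
  have e1 : ∀ a, ∫⁻ b, ENNReal.ofReal (S (t a) (t' b) /
    (α.real (t ⁻¹' {t a}) * β.real (t' ⁻¹' {t' b}))) * d (t a) (t' b) ∂β =
      ∑ j, G (t a) j * β (t' ⁻¹' {j}) := fun a => lintegral_cell β ht' (fun j => G (t a) j)
  simp_rw [e1]
  rw [lintegral_cell α ht (fun i => ∑ j, G i j * β (t' ⁻¹' {j})),
    ENNReal.ofReal_sum_of_nonneg (fun i _ => Finset.sum_nonneg fun j _ =>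
      mul_nonneg (hS i j) (NNReal.coe_nonneg _))]
  refine Finset.sum_le_sum fun i _ => ?_
  rw [Finset.sum_mul, ENNReal.ofReal_sum_of_nonneg (fun j _ =>
      mul_nonneg (hS i j) (NNReal.coe_nonneg _))]
  refine Finset.sum_le_sum fun j _ => ?_
  have h0 := hS i j
  rw [← ofReal_measureReal (μ := β) (s := t' ⁻¹' {j}),
    ← ofReal_measureReal (μ := α) (s := t ⁻¹' {i}), show G i j = ENNReal.ofReal (S i j /
    (α.real (t ⁻¹' {i}) * β.real (t' ⁻¹' {j}))) * d i j from rfl, ← ENNReal.ofReal_coe_nnreal,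
    ← ENNReal.ofReal_mul (by positivity), ← ENNReal.ofReal_mul (by positivity),
    ← ENNReal.ofReal_mul (by positivity)]
  apply ENNReal.ofReal_le_ofReal
  set P := α.real (t ⁻¹' {i})
  set Q := β.real (t' ⁻¹' {j})
  by_cases hP : P = 0
  · simp [hP]; positivity
  by_cases hQ : Q = 0
  · simp [hQ]; positivity
  apply le_of_eq
  field_simp

lemma exists_cells (g : ℝ × ℝ → ℝ≥0) (hg : Continuous g) (hs : HasCompactSupport g) {ε : ℝ≥0}
    (hε : 0 < ε) : ∃ (N : ℕ) (t : ℝ → Fin N), Measurable t ∧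
      ∀ a b a' b', t a = t a' → t b = t b' → g (a, b) ≤ g (a', b') + ε := by
  have huc : UniformContinuous g := hs.uniformContinuous_of_continuous hg
  obtain ⟨δ, hδ, hδg⟩ := Metric.uniformContinuous_iff.1 huc ε hε
  obtain ⟨M, hM⟩ := hs.isCompact.isBounded.subset_closedBall (0 : ℝ × ℝ)
  set L : ℝ := max M 0 + 1
  have hL : 0 < L := by positivity
  have hzero : ∀ a b, L ≤ max |a| |b| → g (a, b) = 0 := by
    intro a b h
    by_contra h'
    have := hM (subset_tsupport _ h')
    rw [mem_closedBall_zero_iff, Prod.norm_def] at this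
    simp only [Real.norm_eq_abs] at this
    have := le_max_left M 0
    linarith
  -- clamp
  let cl : ℝ → ℝ := fun a => max (-L) (min a L)
  have hcl : ∀ a b, g (a, b) = g (cl a, cl b) := by
    intro a b
    by_cases ha : |a| < L
    · by_cases hb : |b| < L
      · rw [abs_lt] at ha hb
        simp only [cl]
        rw [min_eq_left ha.2.le, min_eq_left hb.2.le, max_eq_right ha.1.le, max_eq_right hb.1.le]
      · rw [not_lt] at hb
        rw [hzero _ _ (le_max_of_le_right hb), hzero _ _ (le_max_of_le_right ?_)]
        simp only [cl]
        rcases le_abs.1 hb with h | h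
        · rw [min_eq_right h, max_eq_right (by linarith)]; exact le_abs_self _
        · rw [max_eq_left ((min_le_left _ _).trans (by linarith)), abs_neg]; exact le_abs_self _
    · rw [not_lt] at ha
      rw [hzero _ _ (le_max_of_le_left ha), hzero _ _ (le_max_of_le_left ?_)]
      simp only [cl]
      rcases le_abs.1 ha with h | h
      · rw [min_eq_right h, max_eq_right (by linarith)]; exact le_abs_self _
      · rw [max_eq_left ((min_le_left _ _).trans (by linarith)), abs_neg]; exact le_abs_self _
  have hclm : Measurable cl := by fun_prop
  have hlo : ∀ a, -L ≤ cl a := fun a => le_max_left _ _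
  have hhi : ∀ a, cl a ≤ L := fun a => max_le (by linarith) (min_le_right _ _)
  let τ : ℝ → ℕ := fun a => ⌊(cl a + L) / δ⌋₊
  have hτm : Measurable τ := Nat.measurable_floor.comp ((hclm.add_const _).div_const _)
  have hτ : ∀ a, τ a < ⌊(2 * L) / δ⌋₊ + 1 := by
    intro a
    apply Nat.lt_succ_of_le
    apply Nat.floor_le_floor
    have := hhi a
    gcongr
    linarith
  have hτd : ∀ a a', τ a = τ a' → dist (cl a) (cl a') < δ := by
    intro a a' h
    have n1 : 0 ≤ (cl a + L) / δ := div_nonneg (by linarith [hlo a]) hδ.le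
    have n2 : 0 ≤ (cl a' + L) / δ := div_nonneg (by linarith [hlo a']) hδ.le
    have h1 := Nat.floor_le n1
    have h2 := Nat.lt_floor_add_one ((cl a + L) / δ)
    have h3 := Nat.floor_le n2
    have h4 := Nat.lt_floor_add_one ((cl a' + L) / δ)
    have h5 : (⌊(cl a + L) / δ⌋₊ : ℝ) = ⌊(cl a' + L) / δ⌋₊ := by exact_mod_cast h
    have h6 : |(cl a + L) / δ - (cl a' + L) / δ| < 1 := by
      rw [abs_lt]; constructor <;> linarith
    rw [← sub_div, abs_div, abs_of_pos hδ, div_lt_one hδ] at h6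
    rw [Real.dist_eq]
    simpa using h6
  refine ⟨⌊(2 * L) / δ⌋₊ + 1, fun a => ⟨τ a, hτ a⟩, ?_, ?_⟩
  · refine measurable_to_countable' fun i => ?_
    have : (fun a => (⟨τ a, hτ a⟩ : Fin (⌊(2 * L) / δ⌋₊ + 1))) ⁻¹' {i} = τ ⁻¹' {i.1} := by
      ext a; simp [Fin.ext_iff]
    rw [this]
    exact hτm (measurableSet_singleton _)
  · intro a b a' b' h h'
    have h1 := hτd a a' (by simpa using h)
    have h2 := hτd b b' (by simpa using h')
    have h3 := @hδg (cl a, cl b) (cl a', cl b') (by rw [Prod.dist_eq]; exact max_lt h1 h2)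
    rw [hcl a b, hcl a' b', ← NNReal.coe_le_coe]
    rw [NNReal.dist_eq] at h3
    have := (abs_lt.1 h3).2
    push_cast
    linarith

lemma exists_kernel {X : Type*} [MeasurableSpace X] (κ η : Kernel X ℝ) [IsMarkovKernel κ]
    [IsMarkovKernel η] (g : ℝ × ℝ → ℝ≥0) (hg : Continuous g) (hs : HasCompactSupport g) {ε : ℝ≥0}
    (hε : 0 < ε) : ∃ K : Kernel X (ℝ × ℝ), (∀ x, IsCoupling (K x) (κ x) (η x)) ∧
      ∀ x, ∫⁻ w, (g w : ℝ≥0∞) ∂(K x) ≤ Wc (fun a b => (g (a, b) : ℝ≥0∞)) (κ x) (η x) + 3 * ε := by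
  obtain ⟨N, t, ht, hcell⟩ := exists_cells g hg hs hε
  let rep : Fin N → ℝ := Function.invFun t
  have hrep : ∀ a, t (rep (t a)) = t a := fun a => Function.invFun_eq ⟨a, rfl⟩
  let d : Fin N → Fin N → ℝ≥0 := fun i j => g (rep i, rep j)
  have hd1 : ∀ a b, d (t a) (t b) ≤ g (a, b) + ε := fun a b => hcell _ _ _ _ (hrep a) (hrep b)
  have hd2 : ∀ a b, g (a, b) ≤ d (t a) (t b) + ε := fun a b =>
    hcell _ _ _ _ (hrep a).symm (hrep b).symm
  let p : X → Fin N → ℝ := fun x i => (κ x).real (t ⁻¹' {i})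
  let q : X → Fin N → ℝ := fun x i => (η x).real (t ⁻¹' {i})
  have mp : ∀ i, Measurable fun x => p x i := fun i =>
    (Kernel.measurable_coe κ (ht (measurableSet_singleton i))).ennreal_toReal
  have mq : ∀ i, Measurable fun x => q x i := fun i =>
    (Kernel.measurable_coe η (ht (measurableSet_singleton i))).ennreal_toReal
  obtain ⟨S, mS, hS, hr, hcs, hopt⟩ := exists_selection p q mp mq
    (fun x i => measureReal_nonneg) (fun x i => measureReal_nonneg)
    (fun x => sum_cell (κ x) ht) (fun x => sum_cell (η x) ht) d (ε := ε) hε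
  have mD : Measurable (Function.uncurry fun x => liftD t t (p x) (q x) (S x)) := by
    have : Measurable fun z : X × (Fin N × Fin N) => ENNReal.ofReal (S z.1 z.2.1 z.2.2 /
        (p z.1 z.2.1 * q z.1 z.2.2)) := by
      refine measurable_from_prod_countable_left fun z => ?_
      have := mS z.1 z.2
      have := mp z.1
      have := mq z.2
      dsimp only
      fun_prop
    exact this.comp (measurable_fst.prodMk ((ht.comp (measurable_fst.comp measurable_snd)).prodMk
      (ht.comp (measurable_snd.comp measurable_snd))))
  refine ⟨(κ ×ₖ η).withDensity fun x => liftD t t (p x) (q x) (S x), ?_, ?_⟩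
  · intro x
    rw [Kernel.withDensity_apply _ mD, Kernel.prod_apply]
    exact lift_coupling (κ x) (η x) ht ht (hS x) (hr x) (hcs x)
  · intro x
    unfold Wc
    simp only [ENNReal.iInf_add]
    refine le_iInf₂ fun π hπ => ?_
    obtain ⟨hπ1, hπ2⟩ := hπ
    have : IsProbabilityMeasure π := by
      have : IsProbabilityMeasure (π.map Prod.fst) := by rw [hπ1]; infer_instance
      exact Measure.isProbabilityMeasure_of_map Prod.fst
    let R : Fin N → Fin N → ℝ≥0 := fun i j =>
      (π ((t ∘ Prod.fst) ⁻¹' {i} ∩ (t ∘ Prod.snd) ⁻¹' {j})).toNNReal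
    have mt1 : Measurable (t ∘ (Prod.fst : ℝ × ℝ → ℝ)) := ht.comp measurable_fst
    have mt2 : Measurable (t ∘ (Prod.snd : ℝ × ℝ → ℝ)) := ht.comp measurable_snd
    have hRr : ∀ i, ∑ j, (R i j : ℝ) = p x i := by
      intro i
      have h := sum_inter_cell π ((t ∘ Prod.fst) ⁻¹' {i}) mt2
      simp only [R, p, Measure.real, ENNReal.coe_toNNReal_eq_toReal]
      rw [← ENNReal.toReal_sum (fun _ _ => measure_ne_top _ _), h, ← hπ1,
        Measure.map_apply measurable_fst (ht (measurableSet_singleton i))]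
      rfl
    have hRc : ∀ j, ∑ i, (R i j : ℝ) = q x j := by
      intro j
      have h := sum_inter_cell π ((t ∘ Prod.snd) ⁻¹' {j}) mt1
      simp only [R, q, Measure.real, ENNReal.coe_toNNReal_eq_toReal]
      simp_rw [Set.inter_comm _ ((t ∘ Prod.snd) ⁻¹' {j})]
      rw [← ENNReal.toReal_sum (fun _ _ => measure_ne_top _ _), h, ← hπ2,
        Measure.map_apply measurable_snd (ht (measurableSet_singleton j))]
      rfl
    have hRcost : ENNReal.ofReal (∑ i, ∑ j, (R i j : ℝ) * d i j) =
        ∫⁻ w, (d (t w.1) (t w.2) : ℝ≥0∞) ∂π := by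
      have h := lintegral_cell π (mt1.prodMk mt2) (fun z => (d z.1 z.2 : ℝ≥0∞))
      simp only [Function.comp_apply] at h
      rw [h, Fintype.sum_prod_type, ENNReal.ofReal_sum_of_nonneg (fun i _ => by positivity)]
      refine Finset.sum_congr rfl fun i _ => ?_
      rw [ENNReal.ofReal_sum_of_nonneg (fun i _ => by positivity)]
      refine Finset.sum_congr rfl fun j _ => ?_
      rw [← NNReal.coe_mul, ENNReal.ofReal_coe_nnreal, ENNReal.coe_mul,
        ENNReal.coe_toNNReal (measure_ne_top _ _), mul_comm]
      congr 2
      ext w; simp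
    have hopt' := ENNReal.ofReal_le_ofReal (hopt x R hRr hRc)
    rw [ENNReal.ofReal_add (by positivity) (by positivity), hRcost,
      ENNReal.ofReal_coe_nnreal] at hopt'
    have hlc := lift_cost (κ x) (η x) ht ht (hS x) d
    have hK : IsProbabilityMeasure (((κ ×ₖ η).withDensity
        fun x => liftD t t (p x) (q x) (S x)) x) := by
      rw [Kernel.withDensity_apply _ mD, Kernel.prod_apply]
      have h := (lift_coupling (κ x) (η x) ht ht (hS x) (hr x) (hcs x)).1
      have : IsProbabilityMeasure (Measure.map Prod.fst (((κ x).prod (η x)).withDensity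
        (liftD t t (p x) (q x) (S x)))) := by rw [h]; infer_instance
      exact Measure.isProbabilityMeasure_of_map Prod.fst
    have hm1 : ∫⁻ w, (g w : ℝ≥0∞) ∂(((κ ×ₖ η).withDensity
        fun x => liftD t t (p x) (q x) (S x)) x) ≤ ∫⁻ w, (d (t w.1) (t w.2) : ℝ≥0∞)
          ∂(((κ ×ₖ η).withDensity fun x => liftD t t (p x) (q x) (S x)) x) + ε := by
      refine (lintegral_mono (g := fun w => (d (t w.1) (t w.2) : ℝ≥0∞) + ε)
        fun w => by dsimp only; exact_mod_cast hd2 w.1 w.2).trans ?_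
      rw [lintegral_add_right _ measurable_const]; simp
    have hm2 : ∫⁻ w, (d (t w.1) (t w.2) : ℝ≥0∞) ∂π ≤ ∫⁻ w, (g (w.1, w.2) : ℝ≥0∞) ∂π + ε := by
      refine (lintegral_mono (g := fun w => (g (w.1, w.2) : ℝ≥0∞) + ε)
        fun w => by dsimp only; exact_mod_cast hd1 w.1 w.2).trans ?_
      rw [lintegral_add_right _ measurable_const]; simp
    refine hm1.trans ?_
    rw [Kernel.withDensity_apply _ mD, Kernel.prod_apply]
    calc _ ≤ ENNReal.ofReal (∑ i, ∑ j, S x i j * d i j) + ε := by gcongr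
      _ ≤ (∫⁻ w, (d (t w.1) (t w.2) : ℝ≥0∞) ∂π + ε) + ε := by gcongr
      _ ≤ ((∫⁻ w, (g (w.1, w.2) : ℝ≥0∞) ∂π + ε) + ε) + ε := by gcongr
      _ = _ := by ring

lemma half_hard (ρ σ : Measure (ℝ × ℝ)) [IsProbabilityMeasure ρ] [IsProbabilityMeasure σ]
    (h : ρ.fst = σ.fst) (g : ℝ × ℝ → ℝ≥0) (hg : Continuous g) (hs : HasCompactSupport g) {ε : ℝ≥0}
    (hε : 0 < ε) : ∃ f : Measure (ℝ × (ℝ × ℝ)), f.map (Prod.map id Prod.fst) = ρ ∧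
      f.map (Prod.map id Prod.snd) = σ ∧ ∫⁻ w, (g w.2 : ℝ≥0∞) ∂f ≤
      ∫⁻ x, Wc (fun a b => (g (a, b) : ℝ≥0∞)) (ρ.condKernel x) (σ.condKernel x) ∂ρ.fst
        + 3 * ε := by
  obtain ⟨K, hK, hcost⟩ := exists_kernel ρ.condKernel σ.condKernel g hg hs hε
  have : IsMarkovKernel K := ⟨fun x => by
    have : IsProbabilityMeasure ((K x).map Prod.fst) := by rw [(hK x).1]; infer_instance
    exact Measure.isProbabilityMeasure_of_map Prod.fst⟩
  refine ⟨ρ.fst ⊗ₘ K, ?_, ?_, ?_⟩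
  · have e : K.map Prod.fst = ρ.condKernel := by
      ext1 x; rw [Kernel.map_apply _ measurable_fst, (hK x).1]
    rw [← Measure.compProd_map measurable_fst, e, Measure.disintegrate]
  · have e : K.map Prod.snd = σ.condKernel := by
      ext1 x; rw [Kernel.map_apply _ measurable_snd, (hK x).2]
    rw [← Measure.compProd_map measurable_snd, e, h, Measure.disintegrate]
  · rw [Measure.lintegral_compProd (by have := hg.measurable; fun_prop)]
    refine (lintegral_mono hcost).trans ?_
    rw [lintegral_add_right _ measurable_const]; simp

lemma half_easy (ρ σ : Measure (ℝ × ℝ)) [IsProbabilityMeasure ρ] [IsProbabilityMeasure σ]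
    (c : ℝ → ℝ → ℝ≥0∞) (hc : Measurable fun p : ℝ × ℝ => c p.1 p.2)
    (f : Measure (ℝ × (ℝ × ℝ))) [IsProbabilityMeasure f] (h1 : f.map (Prod.map id Prod.fst) = ρ)
    (h2 : f.map (Prod.map id Prod.snd) = σ) :
      ∫⁻ x, Wc c (ρ.condKernel x) (σ.condKernel x) ∂ρ.fst ≤ ∫⁻ w, c w.2.1 w.2.2 ∂f := by
  have e1 : ρ.fst = f.fst := by
    rw [← h1, Measure.fst, Measure.map_map measurable_fst (by fun_prop)]; rfl
  have e2 : σ.fst = f.fst := by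
    rw [← h2, Measure.fst, Measure.map_map measurable_fst (by fun_prop)]; rfl
  have a1 : ∀ᵐ x ∂ρ.fst, f.condKernel.map Prod.fst x = ρ.condKernel x := by
    apply eq_condKernel_of_measure_eq_compProd
    rw [Measure.compProd_map measurable_fst, e1, Measure.disintegrate, h1]
  have a2 : ∀ᵐ x ∂ρ.fst, f.condKernel.map Prod.snd x = σ.condKernel x := by
    rw [e1, ← e2]
    apply eq_condKernel_of_measure_eq_compProd
    rw [Measure.compProd_map measurable_snd, e2, Measure.disintegrate, h2]
  have hf : ∫⁻ w, c w.2.1 w.2.2 ∂f = ∫⁻ x, ∫⁻ w, c w.1 w.2 ∂(f.condKernel x) ∂ρ.fst := by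
    conv_lhs => rw [← f.disintegrate f.condKernel]
    rw [e1, Measure.lintegral_compProd (f := fun w : ℝ × (ℝ × ℝ) => c w.2.1 w.2.2) (hc.comp measurable_snd)]
  rw [hf]
  refine lintegral_mono_ae ?_
  filter_upwards [a1, a2] with x hx1 hx2
  refine iInf₂_le (f.condKernel x) ⟨?_, ?_⟩
  · rw [← hx1, Kernel.map_apply _ measurable_fst]
  · rw [← hx2, Kernel.map_apply _ measurable_snd]

lemma glue {A B C : Type*} [MeasurableSpace A] [MeasurableSpace B] [MeasurableSpace C]
    [StandardBorelSpace B] [StandardBorelSpace C] [Nonempty B] [Nonempty C]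
    (f1 : Measure (A × B)) (f2 : Measure (A × C)) [IsProbabilityMeasure f1]
    [IsProbabilityMeasure f2] (h : f1.fst = f2.fst) :
    ∃ P : Measure (A × (B × C)), P.map (Prod.map id Prod.fst) = f1 ∧
      P.map (Prod.map id Prod.snd) = f2 := by
  refine ⟨f1.fst ⊗ₘ (f1.condKernel ×ₖ f2.condKernel), ?_, ?_⟩
  · have e : (f1.condKernel ×ₖ f2.condKernel).map Prod.fst = f1.condKernel := by
      rw [← Kernel.fst_eq, Kernel.fst_prod]
    rw [← Measure.compProd_map measurable_fst, e, Measure.disintegrate]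
  · have e : (f1.condKernel ×ₖ f2.condKernel).map Prod.snd = f2.condKernel := by
      rw [← Kernel.snd_eq, Kernel.snd_prod]
    rw [← Measure.compProd_map measurable_snd, e, h, Measure.disintegrate]

lemma isProb_of_map {A B : Type*} [MeasurableSpace A] [MeasurableSpace B] {f : Measure A}
    {T : A → B} {ρ : Measure B} [IsProbabilityMeasure ρ] (h : f.map T = ρ) :
    IsProbabilityMeasure f := by
  have : IsProbabilityMeasure (f.map T) := by rw [h]; infer_instance
  exact Measure.isProbabilityMeasure_of_map T

lemma Wc_mono {A B : Type*} [MeasurableSpace A] [MeasurableSpace B] {c c' : A → B → ℝ≥0∞}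
    (h : ∀ a b, c a b ≤ c' a b) (μ : Measure A) (ν : Measure B) : Wc c μ ν ≤ Wc c' μ ν :=
  iInf₂_mono fun _ _ => lintegral_mono fun _ => h _ _

lemma Z_easy (μ ν : Measure (ℝ × ℝ)) [IsProbabilityMeasure μ] [IsProbabilityMeasure ν]
    (c₁ c₂ : ℝ → ℝ → ℝ≥0∞)
    (hc₁ : Measurable fun p : ℝ × ℝ => c₁ p.1 p.2)
    (hc₂ : Measurable fun p : ℝ × ℝ => c₂ p.1 p.2) (π : Measure ((ℝ × ℝ) × (ℝ × ℝ)))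
    (hπ : IsCoupling π μ ν) :
    (⨅ ζ : {ζ : Measure (ℝ × ℝ) // IsProbabilityMeasure ζ ∧
          ζ.map Prod.snd = μ.map Prod.snd ∧ ζ.map Prod.fst = ν.map Prod.fst},
          letI := ζ.2.1
          Zfun μ ν ζ.1 c₁ c₂) ≤ ∫⁻ w, (c₁ w.1.1 w.2.1 + c₂ w.1.2 w.2.2) ∂π := by
  obtain ⟨h1, h2⟩ := hπ
  have : IsProbabilityMeasure π := isProb_of_map h1
  have mz : Measurable fun w : (ℝ × ℝ) × (ℝ × ℝ) => (w.2.1, w.1.2) := by fun_prop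
  have hζ : IsProbabilityMeasure (π.map fun w => (w.2.1, w.1.2)) :=
    Measure.isProbabilityMeasure_map mz.aemeasurable
  have k1 : (π.map fun w => (w.2.1, w.1.2)).map Prod.snd = μ.map Prod.snd := by
    rw [← h1, Measure.map_map measurable_snd mz, Measure.map_map measurable_snd measurable_fst]; rfl
  have k2 : (π.map fun w => (w.2.1, w.1.2)).map Prod.fst = ν.map Prod.fst := by
    rw [← h2, Measure.map_map measurable_fst mz, Measure.map_map measurable_fst measurable_snd]; rfl
  refine (iInf_le _ ⟨π.map fun w => (w.2.1, w.1.2), hζ, k1, k2⟩).trans ?_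
  unfold Zfun
  have m1 : Measurable fun w : (ℝ × ℝ) × (ℝ × ℝ) => c₁ w.1.1 w.2.1 :=
    hc₁.comp (g := fun p : ℝ × ℝ => c₁ p.1 p.2)
      (f := fun w : (ℝ × ℝ) × (ℝ × ℝ) => (w.1.1, w.2.1)) (by fun_prop)
  rw [lintegral_add_left m1]
  have mf1 : Measurable fun w : (ℝ × ℝ) × (ℝ × ℝ) => (w.1.2, (w.1.1, w.2.1)) := by fun_prop
  have mf2 : Measurable fun w : (ℝ × ℝ) × (ℝ × ℝ) => (w.2.1, (w.1.2, w.2.2)) := by fun_prop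
  have := Measure.isProbabilityMeasure_map (μ := π) mf1.aemeasurable
  have := Measure.isProbabilityMeasure_map (μ := π) mf2.aemeasurable
  have := Measure.isProbabilityMeasure_map (μ := μ) measurable_swap.aemeasurable
  have := Measure.isProbabilityMeasure_map (μ := π.map fun w => (w.2.1, w.1.2))
    measurable_swap.aemeasurable
  refine add_le_add ?_ ?_
  · have := half_easy (μ.map Prod.swap) ((π.map fun w => (w.2.1, w.1.2)).map Prod.swap) c₁ hc₁
      (π.map fun w => (w.1.2, (w.1.1, w.2.1)))
      (by rw [Measure.map_map (by fun_prop) mf1, ← h1, Measure.map_map measurable_swap measurable_fst]; rfl)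
      (by rw [Measure.map_map (by fun_prop) mf1, Measure.map_map measurable_swap mz]; rfl)
    rw [lintegral_map (f := fun w : ℝ × (ℝ × ℝ) => c₁ w.2.1 w.2.2) (hc₁.comp measurable_snd) mf1, Measure.fst_map_swap] at this
    exact this
  · have := half_easy (π.map fun w => (w.2.1, w.1.2)) ν c₂ hc₂
      (π.map fun w => (w.2.1, (w.1.2, w.2.2)))
      (by rw [Measure.map_map (by fun_prop) mf2]; rfl)
      (by rw [Measure.map_map (by fun_prop) mf2, ← h2]; rfl)
    rw [lintegral_map (f := fun w : ℝ × (ℝ × ℝ) => c₂ w.2.1 w.2.2) (hc₂.comp measurable_snd) mf2] at this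
    have k3 : (π.map fun w => (w.2.1, w.1.2)).fst = ν.map Prod.fst := k2
    rw [k3] at this
    exact this

lemma Z_hard (μ ν ζ : Measure (ℝ × ℝ)) [IsProbabilityMeasure μ] [IsProbabilityMeasure ν]
    [IsProbabilityMeasure ζ] (hζ2 : ζ.map Prod.snd = μ.map Prod.snd)
    (hζ1 : ζ.map Prod.fst = ν.map Prod.fst)
    (c₁ c₂ : ℝ → ℝ → ℝ≥0∞) (g₁ g₂ : ℝ × ℝ → ℝ≥0) (hg₁ : Continuous g₁) (hg₂ : Continuous g₂)
    (hs₁ : HasCompactSupport g₁) (hs₂ : HasCompactSupport g₂) (h₁ : ∀ a b, g₁ (a, b) ≤ c₁ a b)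
    (h₂ : ∀ a b, g₂ (a, b) ≤ c₂ a b) {ε : ℝ≥0} (hε : 0 < ε) :
    ∃ π : Measure ((ℝ × ℝ) × (ℝ × ℝ)), IsCoupling π μ ν ∧
      ∫⁻ w, ((g₁ (w.1.1, w.2.1) : ℝ≥0∞) + g₂ (w.1.2, w.2.2)) ∂π ≤ Zfun μ ν ζ c₁ c₂ + 6 * ε := by
  have := Measure.isProbabilityMeasure_map (μ := μ) measurable_swap.aemeasurable
  have := Measure.isProbabilityMeasure_map (μ := ζ) measurable_swap.aemeasurable
  obtain ⟨f1, hf1a, hf1b, hf1c⟩ := half_hard (μ.map Prod.swap) (ζ.map Prod.swap)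
    (by rw [Measure.fst_map_swap, Measure.fst_map_swap]; exact hζ2.symm) g₁ hg₁ hs₁ hε
  obtain ⟨f2, hf2a, hf2b, hf2c⟩ := half_hard ζ ν hζ1 g₂ hg₂ hs₂ hε
  have : IsProbabilityMeasure f1 := isProb_of_map hf1a
  have : IsProbabilityMeasure f2 := isProb_of_map hf2a
  -- f1 : (x2,(x1,y1)), f2 : (y1,(x2,y2))
  have mF1 : Measurable fun w : ℝ × (ℝ × ℝ) => ((w.2.2, w.1), w.2.1) := by fun_prop
  have mF2 : Measurable fun w : ℝ × (ℝ × ℝ) => ((w.1, w.2.1), w.2.2) := by fun_prop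
  have := Measure.isProbabilityMeasure_map (μ := f1) mF1.aemeasurable
  have := Measure.isProbabilityMeasure_map (μ := f2) mF2.aemeasurable
  obtain ⟨P, hP1, hP2⟩ := glue (f1.map fun w => ((w.2.2, w.1), w.2.1))
    (f2.map fun w => ((w.1, w.2.1), w.2.2)) (by
      have e1 : (f1.map fun w => ((w.2.2, w.1), w.2.1)).fst = ζ := by
        have : (ζ.map Prod.swap).map Prod.swap = ζ := by
          rw [Measure.map_map measurable_swap measurable_swap]; simp
        rw [← this, ← hf1b, Measure.fst, Measure.map_map measurable_fst mF1,
          Measure.map_map measurable_swap (by fun_prop)]; rfl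
      have e2 : (f2.map fun w => ((w.1, w.2.1), w.2.2)).fst = ζ := by
        rw [← hf2a, Measure.fst, Measure.map_map measurable_fst mF2]; rfl
      rw [e1, e2])
  -- P : ((y1,x2),(x1,y2))
  have mT : Measurable fun w : (ℝ × ℝ) × (ℝ × ℝ) => ((w.2.1, w.1.2), (w.1.1, w.2.2)) := by fun_prop
  have mA : Measurable fun w : (ℝ × ℝ) × ℝ => (w.2, w.1.2) := by fun_prop
  have mB : Measurable fun w : (ℝ × ℝ) × ℝ => (w.1.1, w.2) := by fun_prop
  have mg1 := hg₁.measurable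
  have mg2 := hg₂.measurable
  refine ⟨P.map fun w => ((w.2.1, w.1.2), (w.1.1, w.2.2)), ⟨?_, ?_⟩, ?_⟩
  · have : (μ.map Prod.swap).map Prod.swap = μ := by
      rw [Measure.map_map measurable_swap measurable_swap]; simp
    rw [Measure.map_map measurable_fst mT]
    have h := congrArg (Measure.map fun w : (ℝ × ℝ) × ℝ => (w.2, w.1.2)) hP1
    rw [Measure.map_map mA (by fun_prop), Measure.map_map mA mF1] at h
    rw [← this, ← hf1a, Measure.map_map measurable_swap (by fun_prop)]
    exact h
  · rw [Measure.map_map measurable_snd mT]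
    have h := congrArg (Measure.map fun w : (ℝ × ℝ) × ℝ => (w.1.1, w.2)) hP2
    rw [Measure.map_map mB (by fun_prop), Measure.map_map mB mF2] at h
    rw [← hf2b]
    exact h
  · rw [lintegral_map (by fun_prop) mT, lintegral_add_left (by fun_prop)]
    dsimp only
    have c1 : ∫⁻ w, (g₁ (w.2.1, w.1.1) : ℝ≥0∞) ∂P = ∫⁻ w, (g₁ w.2 : ℝ≥0∞) ∂f1 := by
      have h := congrArg (fun m => ∫⁻ w, (g₁ (w.2, w.1.1) : ℝ≥0∞) ∂m) hP1
      rw [lintegral_map (by fun_prop) (by fun_prop), lintegral_map (by fun_prop) mF1] at h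
      exact h
    have c2 : ∫⁻ w, (g₂ (w.1.2, w.2.2) : ℝ≥0∞) ∂P = ∫⁻ w, (g₂ w.2 : ℝ≥0∞) ∂f2 := by
      have h := congrArg (fun m => ∫⁻ w, (g₂ (w.1.2, w.2) : ℝ≥0∞) ∂m) hP2
      rw [lintegral_map (by fun_prop) (by fun_prop), lintegral_map (by fun_prop) mF2] at h
      exact h
    rw [c1, c2]
    refine (add_le_add hf1c hf2c).trans ?_
    unfold Zfun
    have e : ∀ a b e : ℝ≥0∞, (a + 3 * e) + (b + 3 * e) = a + b + 6 * e := by intros; ring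
    rw [e, Measure.fst_map_swap]
    refine add_le_add_left (add_le_add ?_ ?_) _
    · exact lintegral_mono fun x => Wc_mono h₁ _ _
    · rw [← hζ1]
      exact lintegral_mono fun x => Wc_mono h₂ _ _

lemma exists_approx (c : ℝ × ℝ → ℝ≥0∞) (hc : Continuous c) : ∃ g : ℕ → ℝ × ℝ → ℝ≥0,
    (∀ n, Continuous (g n)) ∧ (∀ n, HasCompactSupport (g n)) ∧ (∀ n p, g n p ≤ n) ∧
    (∀ p, Monotone fun n => g n p) ∧ ∀ p, ⨆ n, (g n p : ℝ≥0∞) = c p := by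
  have hne : ∀ (n : ℕ) p, min (c p) n ≠ ∞ := fun n p =>
    ne_top_of_le_ne_top (ENNReal.natCast_ne_top n) (min_le_right _ _)
  let χ : ℕ → ℝ × ℝ → ℝ≥0 := fun n p => min 1 (Real.toNNReal (n - ‖p‖))
  have hle : ∀ (n : ℕ) p, (((min (c p) (n : ℝ≥0∞)).toNNReal * χ n p : ℝ≥0) : ℝ≥0∞) ≤ min (c p) n := by
    intro n p
    rw [ENNReal.coe_mul, ENNReal.coe_toNNReal (hne n p)]
    exact mul_le_of_le_one_right zero_le (by exact_mod_cast min_le_left _ _)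
  refine ⟨fun n p => (min (c p) n).toNNReal * χ n p, ?_, ?_, ?_, ?_, ?_⟩
  · intro n
    refine Continuous.mul ?_ ?_
    · exact ENNReal.continuousOn_toNNReal.comp_continuous (hc.min continuous_const) (hne n)
    · exact continuous_const.min (continuous_real_toNNReal.comp (by fun_prop))
  · intro n
    refine HasCompactSupport.intro (isCompact_closedBall (0 : ℝ × ℝ) n) fun p hp => ?_
    rw [mem_closedBall_zero_iff, not_le] at hp
    have : χ n p = 0 := by
      simp only [χ]
      rw [Real.toNNReal_of_nonpos (by linarith)]; simp
    dsimp only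
    rw [this, mul_zero]
  · intro n p
    have := (hle n p).trans (min_le_right _ _)
    exact_mod_cast this
  · intro p n m hnm
    dsimp only
    refine mul_le_mul' (ENNReal.toNNReal_mono (hne m p) ?_) ?_
    · gcongr
    · simp only [χ]
      gcongr
  · intro p
    refine le_antisymm (iSup_le fun n => (hle n p).trans (min_le_left _ _)) ?_
    obtain ⟨k, hk⟩ := exists_nat_ge (‖p‖ + 1)
    refine le_of_forall_lt fun b hb => ?_
    obtain ⟨m, hm⟩ := ENNReal.exists_nat_gt (ne_top_of_lt hb)
    refine lt_of_lt_of_le (lt_min hb hm) (le_iSup_of_le (max k m) ?_)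
    have hχ : χ (max k m) p = 1 := by
      simp only [χ]
      apply min_eq_left
      rw [Real.le_toNNReal_iff_coe_le' one_pos]
      have : (k : ℝ) ≤ (max k m : ℕ) := by exact_mod_cast le_max_left _ _
      push_cast at this ⊢
      linarith
    dsimp only
    rw [hχ, mul_one, ENNReal.coe_toNNReal (hne _ p)]
    refine min_le_min le_rfl ?_
    exact_mod_cast le_max_right _ _

lemma continuous_int {E : Type*} [TopologicalSpace E] [MeasurableSpace E] [OpensMeasurableSpace E]
    (g : E → ℝ≥0) (hg : Continuous g) (C : ℝ≥0) (hC : ∀ x, g x ≤ C) :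
    Continuous fun P : ProbabilityMeasure E => ∫⁻ x, (g x : ℝ≥0∞) ∂(P : Measure E) := by
  let φ : BoundedContinuousFunction E ℝ≥0 := BoundedContinuousFunction.mkOfBound ⟨g, hg⟩ C (by
    intro x y
    rw [NNReal.dist_eq, abs_le]
    have h1 : (g x : ℝ) ≤ C := hC x
    have h2 : (g y : ℝ) ≤ C := hC y
    have h3 := (g x).coe_nonneg
    have h4 := (g y).coe_nonneg
    constructor <;> simp <;> linarith)
  exact ProbabilityMeasure.continuous_lintegral_boundedContinuousFunction φ

lemma isCompact_couplings (μ ν : Measure (ℝ × ℝ)) [IsProbabilityMeasure μ]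
    [IsProbabilityMeasure ν] :
    IsCompact {P : ProbabilityMeasure ((ℝ × ℝ) × (ℝ × ℝ)) | IsCoupling (P : Measure _) μ ν} := by
  set C := {P : ProbabilityMeasure ((ℝ × ℝ) × (ℝ × ℝ)) | IsCoupling (P : Measure _) μ ν} with hCdef
  have hcl : IsClosed C := by
    have h1 := ProbabilityMeasure.continuous_map (Ω := (ℝ × ℝ) × (ℝ × ℝ)) (Ω' := ℝ × ℝ)
      continuous_fst
    have h2 := ProbabilityMeasure.continuous_map (Ω := (ℝ × ℝ) × (ℝ × ℝ)) (Ω' := ℝ × ℝ)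
      continuous_snd
    let μ' : ProbabilityMeasure (ℝ × ℝ) := ⟨μ, inferInstance⟩
    let ν' : ProbabilityMeasure (ℝ × ℝ) := ⟨ν, inferInstance⟩
    have c1 := (isClosed_singleton (X := ProbabilityMeasure (ℝ × ℝ)) (x := μ')).preimage h1
    have c2 := (isClosed_singleton (X := ProbabilityMeasure (ℝ × ℝ)) (x := ν')).preimage h2
    convert c1.inter c2 using 1
    ext P
    constructor
    · intro hP
      exact ⟨Subtype.ext hP.1, Subtype.ext hP.2⟩
    · intro hP
      exact ⟨congrArg Subtype.val hP.1, congrArg Subtype.val hP.2⟩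
  rw [← hcl.closure_eq]
  apply isCompact_closure_of_isTightMeasureSet
  apply IsTightMeasureSet.prodMk
  · refine (isTightMeasureSet_singleton (μ := μ)).subset ?_
    rintro _ ⟨_, ⟨P, hP, rfl⟩, rfl⟩
    exact hP.1
  · refine (isTightMeasureSet_singleton (μ := ν)).subset ?_
    rintro _ ⟨_, ⟨P, hP, rfl⟩, rfl⟩
    exact hP.2

lemma Wc_le_Z (μ ν ζ : Measure (ℝ × ℝ)) [IsProbabilityMeasure μ] [IsProbabilityMeasure ν]
    [IsProbabilityMeasure ζ] (hζ2 : ζ.map Prod.snd = μ.map Prod.snd)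
    (hζ1 : ζ.map Prod.fst = ν.map Prod.fst) (c₁ c₂ : ℝ → ℝ → ℝ≥0∞)
    (hc₁ : Continuous fun p : ℝ × ℝ => c₁ p.1 p.2)
    (hc₂ : Continuous fun p : ℝ × ℝ => c₂ p.1 p.2) :
    Wc (fun x y : ℝ × ℝ => c₁ x.1 y.1 + c₂ x.2 y.2) μ ν ≤ Zfun μ ν ζ c₁ c₂ := by
  refine ENNReal.le_of_forall_pos_le_add fun ε hε _ => ?_
  obtain ⟨g, hg, hgs, hgb, hgm, hgc⟩ := exists_approx _ hc₁
  obtain ⟨g', hg', hgs', hgb', hgm', hgc'⟩ := exists_approx _ hc₂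
  set Z := Zfun μ ν ζ c₁ c₂
  let G : ℕ → (ℝ × ℝ) × (ℝ × ℝ) → ℝ≥0 := fun n w => g n (w.1.1, w.2.1) + g' n (w.1.2, w.2.2)
  have hG : ∀ n, Continuous (G n) := fun n => by
    have := hg n
    have := hg' n
    fun_prop
  have hGm : ∀ w, Monotone fun n => G n w := fun w n m h => add_le_add (hgm _ h) (hgm' _ h)
  let A : ℕ → Set (ProbabilityMeasure ((ℝ × ℝ) × (ℝ × ℝ))) := fun n =>
    {P | IsCoupling (P : Measure _) μ ν} ∩ {P | ∫⁻ w, (G n w : ℝ≥0∞) ∂(P : Measure _) ≤ Z + ε}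
  have hIcl : ∀ n, IsClosed {P : ProbabilityMeasure ((ℝ × ℝ) × (ℝ × ℝ)) |
      ∫⁻ w, (G n w : ℝ≥0∞) ∂(P : Measure _) ≤ Z + ε} := fun n =>
    isClosed_le (continuous_int (G n) (hG n) (n + n) fun w => add_le_add (hgb _ _) (hgb' _ _))
      continuous_const
  have hcomp := isCompact_couplings μ ν
  obtain ⟨P, hP⟩ := IsCompact.nonempty_iInter_of_sequence_nonempty_isCompact_isClosed A
    (by
      intro n P hP
      refine ⟨hP.1, le_trans (lintegral_mono fun w => ?_) hP.2⟩
      exact ENNReal.coe_le_coe.2 (hGm w (Nat.le_succ n)))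
    (by
      intro n
      obtain ⟨π, hπ, hπc⟩ := Z_hard μ ν ζ hζ2 hζ1 c₁ c₂ (g n) (g' n) (hg n) (hg' n) (hgs n)
        (hgs' n) (fun a b => (le_iSup (fun n => (g n (a, b) : ℝ≥0∞)) n).trans (hgc (a, b)).le)
        (fun a b => (le_iSup (fun n => (g' n (a, b) : ℝ≥0∞)) n).trans (hgc' (a, b)).le)
        (ε := ε / 6) (by positivity)
      refine ⟨⟨π, isProb_of_map hπ.1⟩, hπ, ?_⟩
      have e6 : (6 : ℝ≥0∞) * ((ε / 6 : ℝ≥0) : ℝ≥0∞) = ε := by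
        have : (6 : ℝ≥0) * (ε / 6) = ε := by field_simp
        exact_mod_cast congrArg (fun r : ℝ≥0 => (r : ℝ≥0∞)) this
      rw [e6] at hπc
      change ∫⁻ w, (G n w : ℝ≥0∞) ∂π ≤ Z + ε
      simpa [G] using hπc)
    (hcomp.inter_right (hIcl 0))
    (fun n => hcomp.isClosed.inter (hIcl n))
  rw [Set.mem_iInter] at hP
  refine (iInf₂_le (P : Measure _) (hP 0).1).trans ?_
  have hsup : ∀ w : (ℝ × ℝ) × (ℝ × ℝ), c₁ w.1.1 w.2.1 + c₂ w.1.2 w.2.2 =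
      ⨆ n, (G n w : ℝ≥0∞) := by
    intro w
    rw [← hgc (w.1.1, w.2.1), ← hgc' (w.1.2, w.2.2), ENNReal.iSup_add_iSup_of_monotone]
    · simp [G]
    · exact fun n m h => ENNReal.coe_le_coe.2 (hgm _ h)
    · exact fun n m h => ENNReal.coe_le_coe.2 (hgm' _ h)
  simp_rw [hsup]
  rw [lintegral_iSup (fun n => (hG n).measurable.coe_nnreal_ennreal)
    (fun n m h w => ENNReal.coe_le_coe.2 (hGm w h))]
  exact iSup_le fun n => (hP n).2

theorem stmt9 (μ ν : Measure (ℝ × ℝ)) [IsProbabilityMeasure μ] [IsProbabilityMeasure ν]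
    (c₁ c₂ : ℝ → ℝ → ℝ≥0∞)
    (hc₁ : Continuous fun p : ℝ × ℝ => c₁ p.1 p.2)
    (hc₂ : Continuous fun p : ℝ × ℝ => c₂ p.1 p.2) :
    Wc (fun x y : ℝ × ℝ => c₁ x.1 y.1 + c₂ x.2 y.2) μ ν
      = ⨅ ζ : {ζ : Measure (ℝ × ℝ) // IsProbabilityMeasure ζ ∧
          ζ.map Prod.snd = μ.map Prod.snd ∧ ζ.map Prod.fst = ν.map Prod.fst},
          letI := ζ.2.1
          Zfun μ ν ζ.1 c₁ c₂ := by
  refine le_antisymm (le_iInf fun ζ => ?_) (le_iInf₂ fun π hπ => ?_)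
  · have := ζ.2.1
    exact Wc_le_Z μ ν ζ.1 ζ.2.2.1 ζ.2.2.2 c₁ c₂ hc₁ hc₂
  · exact Z_easy μ ν c₁ c₂ hc₁.measurable hc₂.measurable π hπ
end
end

section
/- Let μ, ν ∈ P(ℝ²), c(x,y) = h(|x₁−y₁|) + h(|x₂−y₂|) with h convex nonnegative and h(0) = 0, and ζ a pivot measure. Then W_c(μ,ν) = ∫_ℝ ∫_{[0,1]} h(|F⁻¹_{μ_{|x₂}}(s) − F⁻¹_{ζ_{|x₂}}(s)|) ds dμ₂(x₂) + ∫_ℝ ∫_{[0,1]} h(|F⁻¹_{ζ_{|y₁}}(t) − F⁻¹_{ν_{|y₁}}(t)|) dt dν₁(y₁), where F⁻¹ denotes the pseudo-inverse (quantile function) of the cumulative distribution function. -/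
open MeasureTheory ProbabilityTheory
open scoped ENNReal ProbabilityTheory

noncomputable section

variable {X₁ X₂ Y₁ Y₂ : Type*} [MeasurableSpace X₁] [MeasurableSpace X₂]
  [MeasurableSpace Y₁] [MeasurableSpace Y₂]

/-- Pseudo-inverse (quantile function) of the cumulative distribution function. -/
noncomputable def qf (m : Measure ℝ) (s : ℝ) : ℝ := sInf {x : ℝ | s ≤ cdf m x}


/-! ### Quantile functions -/

lemma mset_and {A : Type*} [MeasurableSpace A] {P Q : A → Prop} (hP : MeasurableSet {p | P p})
    (hQ : MeasurableSet {p | Q p}) : MeasurableSet {p | P p ∧ Q p} := hP.inter hQ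

/-- A version of the quantile function, set to zero outside `(0,1)`. -/
def qz (m : Measure ℝ) (s : ℝ) : ℝ := if s ∈ Set.Ioo (0 : ℝ) 1 then qf m s else 0

/-- The uniform law on the unit interval. -/
def unif : Measure ℝ := volume.restrict (Set.Ioo (0 : ℝ) 1)

instance unif_prob : IsProbabilityMeasure unif := ⟨by simp [unif]⟩

lemma unif_eq : volume.restrict (Set.Icc (0 : ℝ) 1) = unif :=
  (Measure.restrict_congr_set Ioo_ae_eq_Icc).symm

lemma qf_le_iff (m : Measure ℝ) {s : ℝ} (hs : s ∈ Set.Ioo (0 : ℝ) 1) (x : ℝ) :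
    qf m s ≤ x ↔ s ≤ cdf m x := by
  have hbdd : BddBelow {x : ℝ | s ≤ cdf m x} := by
    have := (tendsto_cdf_atBot m).eventually (gt_mem_nhds hs.1)
    obtain ⟨b, hb⟩ := this.exists
    refine ⟨b, fun y hy => ?_⟩
    by_contra hlt
    exact absurd (hy.trans (monotone_cdf m (not_le.1 hlt).le)) (not_le.2 hb)
  have hne : {x : ℝ | s ≤ cdf m x}.Nonempty := by
    have := (tendsto_cdf_atTop m).eventually (lt_mem_nhds hs.2)
    obtain ⟨b, hb⟩ := this.exists
    exact ⟨b, hb.le⟩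
  constructor
  · intro hq
    have hr : Filter.Tendsto (cdf m) (nhdsWithin x (Set.Ioi x)) (nhds (cdf m x)) :=
      ((cdf m).right_continuous x).tendsto.mono_left (nhdsWithin_mono _ Set.Ioi_subset_Ici_self)
    refine ge_of_tendsto hr ?_
    filter_upwards [self_mem_nhdsWithin] with y hy
    obtain ⟨z, hz, hzy⟩ := exists_lt_of_csInf_lt hne (lt_of_le_of_lt hq hy)
    exact le_trans hz (monotone_cdf m hzy.le)
  · intro hx
    exact csInf_le hbdd hx

lemma measurable_qz {A : Type*} [MeasurableSpace A] (κ : Kernel A ℝ) [IsMarkovKernel κ] :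
    Measurable (fun p : A × ℝ => qz (κ p.1) p.2) := by
  refine measurable_of_Iic fun x => ?_
  have hc : Measurable (fun p : A × ℝ => cdf (κ p.1) x) := by
    simp_rw [cdf_eq_real]
    exact ((κ.measurable_coe measurableSet_Iic).comp measurable_fst).ennreal_toReal
  have : (fun p : A × ℝ => qz (κ p.1) p.2) ⁻¹' Set.Iic x =
      {p | p.2 ∈ Set.Ioo (0 : ℝ) 1 ∧ p.2 ≤ cdf (κ p.1) x} ∪
        {p | ¬ p.2 ∈ Set.Ioo (0 : ℝ) 1 ∧ 0 ≤ x} := by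
    ext p
    by_cases hp : p.2 ∈ Set.Ioo (0 : ℝ) 1
    · simp [qz, hp, qf_le_iff, -Set.mem_Ioo]
    · simp [qz, hp, -Set.mem_Ioo]
  rw [this]
  have hI : MeasurableSet {p : A × ℝ | p.2 ∈ Set.Ioo (0 : ℝ) 1} := measurable_snd measurableSet_Ioo
  exact (hI.inter (measurableSet_le measurable_snd hc)).union
    (hI.compl.inter (MeasurableSet.const _))

lemma measurable_qz_one (m : Measure ℝ) [IsProbabilityMeasure m] : Measurable (qz m) :=
  (measurable_qz (Kernel.const Unit m)).comp (measurable_const (a := ()) |>.prodMk measurable_id)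

lemma map_qz (m : Measure ℝ) [IsProbabilityMeasure m] : unif.map (qz m) = m := by
  have : IsProbabilityMeasure (unif.map (qz m)) :=
    Measure.isProbabilityMeasure_map (measurable_qz_one m).aemeasurable
  refine Measure.ext_of_Iic _ _ fun x => ?_
  rw [Measure.map_apply (measurable_qz_one m) measurableSet_Iic, unif, Measure.restrict_apply
    (measurable_qz_one m measurableSet_Iic), ← ofReal_cdf]
  have : qz m ⁻¹' Set.Iic x ∩ Set.Ioo 0 1 = Set.Ioc 0 (cdf m x) ∩ Set.Iio 1 := by
    ext s
    constructor
    · rintro ⟨h1, h2⟩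
      simp only [Set.mem_preimage, qz, h2, if_true, Set.mem_Iic, qf_le_iff m h2] at h1
      exact ⟨⟨h2.1, h1⟩, h2.2⟩
    · rintro ⟨h1, h2⟩
      have h3 : s ∈ Set.Ioo (0 : ℝ) 1 := ⟨h1.1, h2⟩
      refine ⟨?_, h3⟩
      simp only [Set.mem_preimage, qz, h3, if_true, Set.mem_Iic, qf_le_iff m h3]
      exact h1.2
  rw [this]
  have h2 : (Set.Ioc 0 (cdf m x) ∩ Set.Iio 1 : Set ℝ) =ᵐ[volume]
      (Set.Ioc 0 (cdf m x) ∩ Set.Iic 1 : Set ℝ) :=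
    (ae_eq_refl _).inter Iio_ae_eq_Iic
  rw [measure_congr h2, Set.inter_eq_left.2 (fun s hs => hs.2.trans (cdf_le_one m x))]
  simp

/-- Functions of the difference for which the monotone coupling is optimal. -/
def MonoOpt (f : ℝ → ℝ≥0∞) : Prop :=
  ∀ (m n : Measure ℝ) (γ : Measure (ℝ × ℝ)), IsProbabilityMeasure m → IsProbabilityMeasure n →
    IsProbabilityMeasure γ → IsCoupling γ m n →
    ∫⁻ s, f (qz m s - qz n s) ∂unif ≤ ∫⁻ p, f (p.1 - p.2) ∂γ

lemma MonoOpt.neg {f : ℝ → ℝ≥0∞} (hf : MonoOpt f) (hm : Measurable f) :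
    MonoOpt (fun z => f (-z)) := by
  intro m n γ hm' hn hγ hc
  have hp : IsProbabilityMeasure (γ.map Prod.swap) :=
    Measure.isProbabilityMeasure_map measurable_swap.aemeasurable
  have := hf n m (γ.map Prod.swap) hn hm' hp
    ⟨by rw [Measure.map_map measurable_fst measurable_swap]; exact hc.2,
      by rw [Measure.map_map measurable_snd measurable_swap]; exact hc.1⟩
  rw [lintegral_map (by fun_prop) measurable_swap] at this
  simpa using this

lemma MonoOpt.add {f g : ℝ → ℝ≥0∞} (hf : MonoOpt f) (hg : MonoOpt g) (hm : Measurable f) :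
    MonoOpt (fun z => f z + g z) := by
  intro m n γ hm' hn hγ hc
  have h1 : Measurable (fun s => f (qz m s - qz n s)) :=
    hm.comp ((measurable_qz_one m).sub (measurable_qz_one n))
  beta_reduce
  rw [lintegral_add_left h1,
    lintegral_add_left (by fun_prop)]
  exact add_le_add (hf m n γ hm' hn hγ hc) (hg m n γ hm' hn hγ hc)

lemma MonoOpt.lintegral {R : Type*} [MeasurableSpace R] (ρ : Measure R) [SFinite ρ]
    {f : R → ℝ → ℝ≥0∞} (hf : ∀ r, MonoOpt (f r)) (hm : Measurable (Function.uncurry f)) :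
    MonoOpt (fun z => ∫⁻ r, f r z ∂ρ) := by
  intro m n γ hm' hn hγ hc
  have h1 := (measurable_qz_one m).sub (measurable_qz_one n)
  have h2 : Measurable (fun p : ℝ × ℝ => p.1 - p.2) := by fun_prop
  beta_reduce
  rw [lintegral_lintegral_swap, lintegral_lintegral_swap (μ := γ)]
  · exact lintegral_mono fun r => hf r m n γ hm' hn hγ hc
  · exact (hm.comp (measurable_snd.prodMk (h2.comp measurable_fst))).aemeasurable
  · exact (hm.comp (measurable_snd.prodMk (h1.comp measurable_fst))).aemeasurable

lemma lint_ind (x y : ℝ) :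
    ∫⁻ u, Set.indicator (Set.Ico y x) (fun _ => (1 : ℝ≥0∞)) u = ENNReal.ofReal (x - y) := by
  rw [lintegral_indicator measurableSet_Ico]
  simp

lemma monoOpt_ofReal (a : ℝ) : MonoOpt (fun z => ENNReal.ofReal (z - a)) := by
  intro m n γ hm hn hγ hc
  have key : ∀ (P : Measure (ℝ × ℝ)) [IsProbabilityMeasure P],
      ∫⁻ p, ENNReal.ofReal (p.1 - p.2 - a) ∂P
        = ∫⁻ u, P {p | p.2 + a ≤ u ∧ u < p.1} := by
    intro P _
    have hS : MeasurableSet {q : (ℝ × ℝ) × ℝ | q.1.2 + a ≤ q.2 ∧ q.2 < q.1.1} :=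
      mset_and (measurableSet_le (by fun_prop) (by fun_prop)) (measurableSet_lt (by fun_prop) (by fun_prop))
    calc ∫⁻ p, ENNReal.ofReal (p.1 - p.2 - a) ∂P
        = ∫⁻ p, ∫⁻ u, Set.indicator {q : (ℝ × ℝ) × ℝ | q.1.2 + a ≤ q.2 ∧ q.2 < q.1.1}
            (fun _ => (1 : ℝ≥0∞)) (p, u) ∂volume ∂P := by
          refine lintegral_congr fun p => ?_
          rw [sub_sub, ← lint_ind]
          rfl
      _ = ∫⁻ u, ∫⁻ p, Set.indicator {q : (ℝ × ℝ) × ℝ | q.1.2 + a ≤ q.2 ∧ q.2 < q.1.1}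
            (fun _ => (1 : ℝ≥0∞)) (p, u) ∂P := by
          rw [lintegral_lintegral_swap]
          exact (measurable_const.indicator hS).aemeasurable
      _ = _ := by
          refine lintegral_congr fun u => ?_
          have hu : MeasurableSet {p : ℝ × ℝ | p.2 + a ≤ u ∧ u < p.1} :=
            mset_and (measurableSet_le (by fun_prop) (by fun_prop)) (measurableSet_lt (by fun_prop) (by fun_prop))
          rw [← lintegral_indicator_one hu]
          rfl
  have hq : Measurable (fun s => (qz m s, qz n s)) :=
    (measurable_qz_one m).prodMk (measurable_qz_one n)
  have hP : IsProbabilityMeasure (unif.map (fun s => (qz m s, qz n s))) :=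
    Measure.isProbabilityMeasure_map hq.aemeasurable
  have e1 := key (unif.map (fun s => (qz m s, qz n s)))
  rw [lintegral_map (by fun_prop) hq] at e1
  simp only at e1
  rw [e1, key γ]
  refine lintegral_mono fun u => ?_
  have hu : MeasurableSet {p : ℝ × ℝ | p.2 + a ≤ u ∧ u < p.1} :=
    mset_and (measurableSet_le (by fun_prop) (by fun_prop)) (measurableSet_lt (by fun_prop) (by fun_prop))
  rw [Measure.map_apply hq hu, unif, Measure.restrict_apply (hq hu)]
  calc volume (((fun s => (qz m s, qz n s)) ⁻¹' {p : ℝ × ℝ | p.2 + a ≤ u ∧ u < p.1})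
        ∩ Set.Ioo 0 1)
      ≤ volume (Set.Ioc (cdf m u) (cdf n (u - a))) := by
        refine measure_mono ?_
        rintro s ⟨⟨h1, h2⟩, h3⟩
        simp only [qz, h3, if_true] at h1 h2
        refine ⟨?_, (qf_le_iff n h3 _).1 (by linarith)⟩
        rw [← not_le, ← qf_le_iff m h3]
        exact not_le.2 h2
    _ = n (Set.Iic (u - a)) - m (Set.Iic u) := by
        rw [Real.volume_Ioc, ENNReal.ofReal_sub _ (cdf_nonneg m u), ofReal_cdf, ofReal_cdf]
    _ ≤ γ {p | p.2 + a ≤ u ∧ u < p.1} := by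
        rw [tsub_le_iff_left]
        nth_rewrite 1 [← hc.1, ← hc.2]
        rw [Measure.map_apply measurable_fst measurableSet_Iic,
          Measure.map_apply measurable_snd measurableSet_Iic]
        refine le_trans (measure_mono ?_) (measure_union_le _ _)
        intro p hp
        simp only [Set.mem_preimage, Set.mem_Iic] at hp
        by_cases h : p.1 ≤ u
        · exact Or.inl h
        · exact Or.inr ⟨by linarith, not_le.1 h⟩

lemma monoOpt_upper (V : Set ℝ) (hV : IsUpperSet V) :
    MonoOpt (fun z => volume (V ∩ Set.Iio z)) := by
  rcases V.eq_empty_or_nonempty with rfl | hne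
  · intro m n γ _ _ _ _
    simp
  by_cases hb : BddBelow V
  · have : (fun z => volume (V ∩ Set.Iio z)) = fun z => ENNReal.ofReal (z - sInf V) := by
      funext z
      refine le_antisymm ?_ ?_
      · rw [← Real.volume_Ico]
        exact measure_mono fun t ht => ⟨csInf_le hb ht.1, ht.2⟩
      · rw [← Real.volume_Ioo]
        refine measure_mono fun t ht => ⟨?_, ht.2⟩
        obtain ⟨v, hv, hvt⟩ := exists_lt_of_csInf_lt hne ht.1
        exact hV hvt.le hv
    rw [this]
    exact monoOpt_ofReal _
  · have : V = Set.univ := by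
      refine Set.eq_univ_of_forall fun t => ?_
      obtain ⟨v, hv, hvt⟩ := not_bddBelow_iff.1 hb t
      exact hV hvt.le hv
    subst this
    intro m n γ _ _ _ _
    simp

lemma measurable_lint_Iio (G : ℝ → ℝ≥0∞) :
    Measurable (fun z => ∫⁻ t in Set.Iio z, G t) := by
  refine Monotone.measurable fun a b hab => ?_
  exact lintegral_mono_set (Set.Iio_subset_Iio hab)

lemma monoOpt_lint {G : ℝ → ℝ} (hG : Monotone G) :
    MonoOpt (fun z => ∫⁻ t in Set.Iio z, ENNReal.ofReal (G t)) := by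
  have hS : MeasurableSet {q : (ℝ × ℝ) × ℝ | q.2 < q.1.2 ∧ q.1.1 < G q.2} :=
    mset_and (measurableSet_lt (by fun_prop) (by fun_prop))
      (measurableSet_lt (by fun_prop) (hG.measurable.comp measurable_snd))
  have hm : Measurable (fun q : ℝ × ℝ => volume ({t | q.1 < G t} ∩ Set.Iio q.2)) := by
    have := measurable_measure_prodMk_left (ν := (volume : Measure ℝ)) hS
    convert this using 3 with q
    ext t
    simp [and_comm]
  have : (fun z => ∫⁻ t in Set.Iio z, ENNReal.ofReal (G t)) =
      fun z => ∫⁻ r, volume ({t | r < G t} ∩ Set.Iio z) ∂(volume.restrict (Set.Ioi (0 : ℝ))) := by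
    funext z
    have hT : MeasurableSet {q : ℝ × ℝ | q.2 < G q.1} :=
      measurableSet_lt measurable_snd (hG.measurable.comp measurable_fst)
    calc ∫⁻ t in Set.Iio z, ENNReal.ofReal (G t)
        = ∫⁻ t in Set.Iio z, ∫⁻ r in Set.Ioi (0 : ℝ),
            Set.indicator {q : ℝ × ℝ | q.2 < G q.1} (fun _ => (1 : ℝ≥0∞)) (t, r) := by
          refine lintegral_congr fun t => ?_
          have e : ∀ r, Set.indicator {q : ℝ × ℝ | q.2 < G q.1} (fun _ => (1 : ℝ≥0∞)) (t, r)
            = Set.indicator (Set.Iio (G t)) 1 r := fun r => rfl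
          simp_rw [e]
          rw [lintegral_indicator_one measurableSet_Iio, Measure.restrict_apply measurableSet_Iio,
            Set.inter_comm, Set.Ioi_inter_Iio, Real.volume_Ioo, sub_zero]
      _ = ∫⁻ r in Set.Ioi (0 : ℝ), ∫⁻ t in Set.Iio z,
            Set.indicator {q : ℝ × ℝ | q.2 < G q.1} (fun _ => (1 : ℝ≥0∞)) (t, r) := by
          rw [lintegral_lintegral_swap]
          exact (measurable_const.indicator hT).aemeasurable
      _ = _ := by
          refine lintegral_congr fun r => ?_
          have hr : MeasurableSet {t | r < G t} := measurableSet_lt measurable_const hG.measurable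
          have e : ∀ t, Set.indicator {q : ℝ × ℝ | q.2 < G q.1} (fun _ => (1 : ℝ≥0∞)) (t, r)
            = Set.indicator {t | r < G t} 1 t := fun t => rfl
          simp_rw [e]
          rw [lintegral_indicator_one hr, Measure.restrict_apply hr]
  rw [this]
  exact MonoOpt.lintegral _ (fun r => monoOpt_upper _ fun x y hxy hx => lt_of_lt_of_le hx (hG hxy)) hm

/-- The one-dimensional optimality of the monotone coupling for convex costs. -/
lemma monoOpt_convex (h : ℝ → ℝ) (hconv : ConvexOn ℝ Set.univ h) (hpos : ∀ t, 0 ≤ h t)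
    (h0 : h 0 = 0) : MonoOpt (fun z => ENNReal.ofReal (h |z|)) := by
  have hcont : Continuous h := continuousOn_univ.1 (hconv.continuousOn isOpen_univ)
  set D : ℝ → ℝ := fun x => derivWithin h (Set.Ioi x) x with hD
  have hDmono : Monotone D := by
    have := hconv.monotoneOn_rightDeriv
    rwa [interior_univ, monotoneOn_univ] at this
  have hder : ∀ x, HasDerivWithinAt h (D x) (Set.Ioi x) x := fun x =>
    hconv.hasDerivWithinAt_rightDeriv_of_mem_interior (by simp)
  have hD0 : 0 ≤ D 0 := by
    have ht := hasDerivWithinAt_iff_tendsto_slope.1 (hder 0)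
    rw [Set.sdiff_singleton_eq_self (by simp)] at ht
    refine ge_of_tendsto ht ?_
    filter_upwards [self_mem_nhdsWithin] with y hy
    have hy0 : 0 < y := hy
    rw [slope_def_field, h0]
    have := hpos y
    simp only [sub_zero]
    positivity
  set G : ℝ → ℝ := fun t => if t < 0 then 0 else D t with hGdef
  have hG : Monotone G := by
    intro s t hst
    simp only [hGdef]
    split_ifs with h1 h2 h2
    · exact le_rfl
    · exact hD0.trans (hDmono (not_lt.1 h2))
    · exact absurd (lt_of_le_of_lt hst h2) h1
    · exact hDmono hst
  have hval : ∀ z, ∫⁻ t in Set.Iio z, ENNReal.ofReal (G t) = ENNReal.ofReal (h (max z 0)) := by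
    intro z
    rcases le_or_gt z 0 with hz | hz
    · rw [max_eq_right hz, h0, ENNReal.ofReal_zero]
      rw [setLIntegral_congr_fun (g := fun _ => 0) measurableSet_Iio]
      · simp
      · intro t ht
        simp [hGdef, lt_of_lt_of_le ht hz]
    · rw [max_eq_left hz.le]
      have hint : IntervalIntegrable D volume 0 z := hDmono.intervalIntegrable
      have hftc := intervalIntegral.integral_eq_sub_of_hasDeriv_right_of_le hz.le
        hcont.continuousOn (fun x _ => hder x) hint
      rw [h0, sub_zero, intervalIntegral.integral_of_le hz.le] at hftc
      rw [← hftc, ofReal_integral_eq_lintegral_ofReal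
        ((intervalIntegrable_iff_integrableOn_Ioc_of_le hz.le).1 hint)]
      · rw [setLIntegral_congr (Ioo_ae_eq_Ioc (α := ℝ) (μ := volume) (a := 0) (b := z)).symm,
          ← lintegral_indicator measurableSet_Iio, ← lintegral_indicator measurableSet_Ioo]
        refine lintegral_congr_ae ?_
        have hne : ∀ᵐ t : ℝ, t ≠ 0 := by simp [ae_iff]
        filter_upwards [hne] with t ht
        by_cases h1 : t < 0
        · simp [Set.indicator, hGdef, h1, h1.not_gt]
        · have h2 : 0 < t := lt_of_le_of_ne (not_lt.1 h1) (Ne.symm ht)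
          simp [Set.indicator, hGdef, h1, h2]
      · filter_upwards [ae_restrict_mem measurableSet_Ioc] with t ht
        exact hD0.trans (hDmono ht.1.le)
  have hmo := monoOpt_lint hG
  have hme := measurable_lint_Iio (fun t => ENNReal.ofReal (G t))
  have hfin := hmo.add (hmo.neg hme) hme
  have hE : (fun z => ENNReal.ofReal (h |z|)) = fun z =>
      (∫⁻ t in Set.Iio z, ENNReal.ofReal (G t)) + ∫⁻ t in Set.Iio (-z), ENNReal.ofReal (G t) := by
    funext z
    rw [hval, hval]
    rcases le_total 0 z with hz | hz
    · simp [abs_of_nonneg hz, hz, h0]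
    · simp [abs_of_nonpos hz, hz, h0]
  rw [hE]
  exact hfin

/-! ### Disintegration lemmas -/

lemma inner_eq (f : ℝ → ℝ≥0∞) (m n : Measure ℝ) :
    ∫⁻ s in Set.Icc (0 : ℝ) 1, f (qf m s - qf n s) = ∫⁻ s, f (qz m s - qz n s) ∂unif := by
  rw [unif_eq, unif]
  refine setLIntegral_congr_fun measurableSet_Ioo fun s hs => ?_
  simp only [qz, hs, if_true]

/-- Conditional lower bound: any three-way law with the given conditional laws costs at least the
integrated one-dimensional transport costs. -/
lemma cond_lower {f : ℝ → ℝ≥0∞} (hf : MonoOpt f) (hm : Measurable f)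
    (θ : Measure (ℝ × (ℝ × ℝ))) [IsProbabilityMeasure θ] (α : Measure ℝ) [IsProbabilityMeasure α]
    (κ κ' : Kernel ℝ ℝ) [IsMarkovKernel κ] [IsMarkovKernel κ']
    (h1 : θ.map (fun p => (p.1, p.2.1)) = α ⊗ₘ κ) (h2 : θ.map (fun p => (p.1, p.2.2)) = α ⊗ₘ κ') :
    ∫⁻ x, (∫⁻ s in Set.Icc (0 : ℝ) 1, f (qf (κ x) s - qf (κ' x) s)) ∂α
      ≤ ∫⁻ p, f (p.2.1 - p.2.2) ∂θ := by
  have hα : θ.fst = α := by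
    have := congrArg Measure.fst h1
    rw [Measure.fst_compProd, Measure.fst, Measure.map_map measurable_fst (by fun_prop)] at this
    exact this
  have hdis : α ⊗ₘ θ.condKernel = θ := by
    rw [← hα]; exact θ.disintegrate θ.condKernel
  set ρ := θ.condKernel with hρ
  have e1 : ρ.map Prod.fst =ᵐ[α] κ := by
    refine Kernel.ae_eq_of_compProd_eq ?_
    rw [Measure.compProd_map measurable_fst, hdis, ← h1]
    rfl
  have e2 : ρ.map Prod.snd =ᵐ[α] κ' := by
    refine Kernel.ae_eq_of_compProd_eq ?_
    rw [Measure.compProd_map measurable_snd, hdis, ← h2]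
    rfl
  rw [← hdis, Measure.lintegral_compProd (by fun_prop)]
  refine lintegral_mono_ae ?_
  filter_upwards [e1, e2] with x hx1 hx2
  rw [inner_eq]
  refine hf (κ x) (κ' x) (ρ x) inferInstance inferInstance inferInstance ⟨?_, ?_⟩
  · rw [← hx1, Kernel.map_apply _ measurable_fst]
  · rw [← hx2, Kernel.map_apply _ measurable_snd]

lemma map_quant (α : Measure ℝ) [IsProbabilityMeasure α] (κ : Kernel ℝ ℝ) [IsMarkovKernel κ] :
    (α.prod unif).map (fun p => (p.1, qz (κ p.1) p.2)) = α ⊗ₘ κ := by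
  have hq : Measurable (fun p : ℝ × ℝ => (p.1, qz (κ p.1) p.2)) :=
    measurable_fst.prodMk (measurable_qz κ)
  ext S hS
  rw [Measure.map_apply hq hS, Measure.prod_apply (hq hS), Measure.compProd_apply hS]
  refine lintegral_congr fun x => ?_
  conv_rhs => rw [← map_qz (κ x)]
  rw [Measure.map_apply (measurable_qz_one _) (measurable_prodMk_left hS)]
  rfl

/-- Existence of a three-way law realizing the one-dimensional costs. -/
lemma cond_exists {f : ℝ → ℝ≥0∞} (hm : Measurable f) (α : Measure ℝ) [IsProbabilityMeasure α]
    (κ κ' : Kernel ℝ ℝ) [IsMarkovKernel κ] [IsMarkovKernel κ'] :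
    ∃ θ : Measure (ℝ × (ℝ × ℝ)), IsProbabilityMeasure θ ∧
      θ.map (fun p => (p.1, p.2.1)) = α ⊗ₘ κ ∧ θ.map (fun p => (p.1, p.2.2)) = α ⊗ₘ κ' ∧
      ∫⁻ p, f (p.2.1 - p.2.2) ∂θ =
        ∫⁻ x, (∫⁻ s in Set.Icc (0 : ℝ) 1, f (qf (κ x) s - qf (κ' x) s)) ∂α := by
  have hq : Measurable (fun p : ℝ × ℝ => (p.1, (qz (κ p.1) p.2, qz (κ' p.1) p.2))) :=
    measurable_fst.prodMk ((measurable_qz κ).prodMk (measurable_qz κ'))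
  refine ⟨(α.prod unif).map (fun p => (p.1, (qz (κ p.1) p.2, qz (κ' p.1) p.2))),
    Measure.isProbabilityMeasure_map hq.aemeasurable, ?_, ?_, ?_⟩
  · rw [Measure.map_map (by fun_prop) hq, ← map_quant]
    rfl
  · rw [Measure.map_map (by fun_prop) hq, ← map_quant]
    rfl
  · simp_rw [inner_eq]
    rw [lintegral_map (by fun_prop) hq, lintegral_prod]
    exact (hm.comp ((measurable_qz κ).sub (measurable_qz κ'))).aemeasurable

/-- Gluing lemma. -/
lemma glue_s16 {Z A B : Type*} [MeasurableSpace Z] [MeasurableSpace A] [MeasurableSpace B]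
    [StandardBorelSpace A] [Nonempty A] [StandardBorelSpace B] [Nonempty B]
    (P : Measure (Z × A)) (Q : Measure (Z × B)) [IsProbabilityMeasure P] [IsProbabilityMeasure Q]
    (hPQ : P.fst = Q.fst) :
    ∃ R : Measure (Z × (A × B)), IsProbabilityMeasure R ∧
      R.map (fun p => (p.1, p.2.1)) = P ∧ R.map (fun p => (p.1, p.2.2)) = Q := by
  refine ⟨P.fst ⊗ₘ (P.condKernel ×ₖ Q.condKernel), inferInstance, ?_, ?_⟩
  · have := Measure.compProd_map (μ := P.fst) (κ := P.condKernel ×ₖ Q.condKernel)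
      (f := Prod.fst) measurable_fst
    rw [← Kernel.fst_eq, Kernel.fst_prod, P.disintegrate] at this
    exact this.symm
  · have := Measure.compProd_map (μ := P.fst) (κ := P.condKernel ×ₖ Q.condKernel)
      (f := Prod.snd) measurable_snd
    rw [← Kernel.snd_eq, Kernel.snd_prod, hPQ, Q.disintegrate] at this
    rw [hPQ]
    exact this.symm

theorem stmt16 (μ ν : Measure (ℝ × ℝ)) [IsProbabilityMeasure μ] [IsProbabilityMeasure ν]
    (h : ℝ → ℝ) (hconv : ConvexOn ℝ Set.univ h) (hpos : ∀ t, 0 ≤ h t) (h0 : h 0 = 0)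
    (ζ : Measure (ℝ × ℝ)) [IsProbabilityMeasure ζ]
    (hζ : IsPivot μ ν (fun a b => ENNReal.ofReal (h |a - b|))
      (fun a b => ENNReal.ofReal (h |a - b|)) ζ)
    -- conditional laws (disintegrations) of μ, ζ, ν:
    (κμ : Kernel ℝ ℝ) [IsMarkovKernel κμ]
    (hκμ : μ = ((μ.map Prod.snd) ⊗ₘ κμ).map Prod.swap)
    (κζ₂ : Kernel ℝ ℝ) [IsMarkovKernel κζ₂]
    (hκζ₂ : ζ = ((μ.map Prod.snd) ⊗ₘ κζ₂).map Prod.swap)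
    (κζ₁ : Kernel ℝ ℝ) [IsMarkovKernel κζ₁]
    (hκζ₁ : ζ = (ν.map Prod.fst) ⊗ₘ κζ₁)
    (κν : Kernel ℝ ℝ) [IsMarkovKernel κν]
    (hκν : ν = (ν.map Prod.fst) ⊗ₘ κν) :
    Wc (fun x y : ℝ × ℝ =>
        ENNReal.ofReal (h |x.1 - y.1|) + ENNReal.ofReal (h |x.2 - y.2|)) μ ν
      = ∫⁻ x₂, (∫⁻ s in Set.Icc (0 : ℝ) 1,
            ENNReal.ofReal (h |qf (κμ x₂) s - qf (κζ₂ x₂) s|)) ∂(μ.map Prod.snd)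
        + ∫⁻ y₁, (∫⁻ t in Set.Icc (0 : ℝ) 1,
            ENNReal.ofReal (h |qf (κζ₁ y₁) t - qf (κν y₁) t|)) ∂(ν.map Prod.fst) := by
  have hcont : Continuous h := continuousOn_univ.1 (hconv.continuousOn isOpen_univ)
  set f : ℝ → ℝ≥0∞ := fun z => ENNReal.ofReal (h |z|) with hf
  have hfm : Measurable f := by
    have : Continuous (fun z => h |z|) := hcont.comp continuous_abs
    exact this.measurable.ennreal_ofReal
  have hopt : MonoOpt f := monoOpt_convex h hconv hpos h0
  have hμ2 : IsProbabilityMeasure (μ.map Prod.snd) :=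
    Measure.isProbabilityMeasure_map measurable_snd.aemeasurable
  have hν1 : IsProbabilityMeasure (ν.map Prod.fst) :=
    Measure.isProbabilityMeasure_map measurable_fst.aemeasurable
  have swap_swap : ∀ M : Measure (ℝ × ℝ), (M.map Prod.swap).map Prod.swap = M := by
    intro M
    rw [Measure.map_map measurable_swap measurable_swap]
    simp
  have hκμ' : (μ.map Prod.snd) ⊗ₘ κμ = μ.map Prod.swap := by
    conv_rhs => rw [hκμ]
    rw [swap_swap]
  have hκζ₂' : (μ.map Prod.snd) ⊗ₘ κζ₂ = ζ.map Prod.swap := by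
    conv_rhs => rw [hκζ₂]
    rw [swap_swap]
  change Wc (fun x y : ℝ × ℝ => f (x.1 - y.1) + f (x.2 - y.2)) μ ν
      = ∫⁻ x₂, (∫⁻ s in Set.Icc (0 : ℝ) 1, f (qf (κμ x₂) s - qf (κζ₂ x₂) s)) ∂(μ.map Prod.snd)
        + ∫⁻ y₁, (∫⁻ t in Set.Icc (0 : ℝ) 1, f (qf (κζ₁ y₁) t - qf (κν y₁) t)) ∂(ν.map Prod.fst)
  change IsPivot μ ν (fun a b => f (a - b)) (fun a b => f (a - b)) ζ at hζ
  refine le_antisymm ?_ ?_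
  · -- upper bound: glue the monotone couplings along `ζ`
    obtain ⟨θ₁, hθ₁, a1, a2, a3⟩ := cond_exists hfm (μ.map Prod.snd) κμ κζ₂
    obtain ⟨θ₂, hθ₂, b1, b2, b3⟩ := cond_exists hfm (ν.map Prod.fst) κζ₁ κν
    rw [← a3, ← b3]
    rw [hκμ'] at a1
    rw [hκζ₂'] at a2
    rw [← hκζ₁] at b1
    rw [← hκν] at b2
    have m1 : Measurable (fun p : ℝ × (ℝ × ℝ) => ((p.2.2, p.1), p.2.1)) := by fun_prop
    have m2 : Measurable (fun p : ℝ × (ℝ × ℝ) => ((p.1, p.2.1), p.2.2)) := by fun_prop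
    have hP : IsProbabilityMeasure (θ₁.map (fun p => ((p.2.2, p.1), p.2.1))) :=
      Measure.isProbabilityMeasure_map m1.aemeasurable
    have hQ : IsProbabilityMeasure (θ₂.map (fun p => ((p.1, p.2.1), p.2.2))) :=
      Measure.isProbabilityMeasure_map m2.aemeasurable
    obtain ⟨R, hR, r1, r2⟩ := glue_s16 (θ₁.map (fun p => ((p.2.2, p.1), p.2.1)))
      (θ₂.map (fun p => ((p.1, p.2.1), p.2.2))) (by
        rw [Measure.fst, Measure.fst, Measure.map_map measurable_fst m1,
          Measure.map_map measurable_fst m2]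
        refine Eq.trans (b := ζ) ?_ b1.symm
        rw [← swap_swap ζ, ← a2, Measure.map_map measurable_swap (by fun_prop)]
        rfl)
    have m3 : Measurable (fun q : (ℝ × ℝ) × (ℝ × ℝ) => ((q.2.1, q.1.2), (q.1.1, q.2.2))) := by
      fun_prop
    have hcoup : IsCoupling (R.map (fun q => ((q.2.1, q.1.2), (q.1.1, q.2.2)))) μ ν := by
      constructor
      · rw [Measure.map_map measurable_fst m3]
        have := congrArg (Measure.map (fun q : (ℝ × ℝ) × ℝ => (q.2, q.1.2))) r1
        rw [Measure.map_map (by fun_prop) (by fun_prop), Measure.map_map (by fun_prop) m1] at this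
        refine Eq.trans this ?_
        rw [← swap_swap μ, ← a1, Measure.map_map measurable_swap (by fun_prop)]
        rfl
      · rw [Measure.map_map measurable_snd m3]
        have := congrArg (Measure.map (fun q : (ℝ × ℝ) × ℝ => (q.1.1, q.2))) r2
        rw [Measure.map_map (by fun_prop) (by fun_prop), Measure.map_map (by fun_prop) m2] at this
        exact Eq.trans this b2
    refine le_trans (iInf₂_le (f := fun (π : Measure ((ℝ × ℝ) × (ℝ × ℝ)))
      (_ : π ∈ {π : Measure ((ℝ × ℝ) × (ℝ × ℝ)) | IsCoupling π μ ν}) =>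
      ∫⁻ p, (f (p.1.1 - p.2.1) + f (p.1.2 - p.2.2)) ∂π) _ hcoup) (le_of_eq ?_)
    rw [lintegral_map (by fun_prop) m3, lintegral_add_left (by fun_prop)]
    congr 1
    · have : ∫⁻ q, f (q.2 - q.1.1) ∂(R.map (fun p => (p.1, p.2.1)))
          = ∫⁻ q, f (q.2 - q.1.1) ∂(θ₁.map (fun p => ((p.2.2, p.1), p.2.1))) := by rw [r1]
      rwa [lintegral_map (by fun_prop) (by fun_prop), lintegral_map (by fun_prop) m1] at this
    · have : ∫⁻ q, f (q.1.2 - q.2) ∂(R.map (fun p => (p.1, p.2.2)))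
          = ∫⁻ q, f (q.1.2 - q.2) ∂(θ₂.map (fun p => ((p.1, p.2.1), p.2.2))) := by rw [r2]
      rwa [lintegral_map (by fun_prop) (by fun_prop), lintegral_map (by fun_prop) m2] at this
  · -- lower bound: via the optimal cardinal flow
    obtain ⟨⟨F₁, F₂⟩, ⟨hF₁, hF₂, c1, c2, c3⟩, hFζ, hFopt⟩ := hζ
    simp only at hF₁ hF₂ c1 c2 c3 hFζ
    have n1 : Measurable (fun p : (ℝ × ℝ) × ℝ => (p.1.2, (p.1.1, p.2))) := by fun_prop
    have n2 : Measurable (fun p : ℝ × (ℝ × ℝ) => (p.2.1, (p.1, p.2.2))) := by fun_prop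
    have hP1 : IsProbabilityMeasure (F₁.map (fun p => (p.1.2, (p.1.1, p.2)))) :=
      Measure.isProbabilityMeasure_map n1.aemeasurable
    have hP2 : IsProbabilityMeasure (F₂.map (fun p => (p.2.1, (p.1, p.2.2)))) :=
      Measure.isProbabilityMeasure_map n2.aemeasurable
    have l1 := cond_lower hopt hfm (F₁.map (fun p => (p.1.2, (p.1.1, p.2)))) (μ.map Prod.snd)
      κμ κζ₂ (by
        rw [hκμ', ← c1, Measure.map_map (by fun_prop) n1,
          Measure.map_map measurable_swap measurable_fst]
        rfl) (by
        rw [hκζ₂', ← hFζ, Measure.map_map (by fun_prop) n1,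
          Measure.map_map measurable_swap (by fun_prop)]
        rfl)
    have l2 := cond_lower hopt hfm (F₂.map (fun p => (p.2.1, (p.1, p.2.2)))) (ν.map Prod.fst)
      κζ₁ κν (by
        rw [← hκζ₁, ← hFζ, c3, Measure.map_map (by fun_prop) n2]
        rfl) (by
        rw [← hκν, ← c2, Measure.map_map (by fun_prop) n2]
        rfl)
    rw [lintegral_map (by fun_prop) n1] at l1
    rw [lintegral_map (by fun_prop) n2] at l2
    refine (add_le_add l1 l2).trans ?_
    change CT (fun a b => f (a - b)) (fun a b => f (a - b)) (F₁, F₂) ≤ _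
    rw [hFopt]
    refine le_iInf₂ fun π hπ => ?_
    obtain ⟨p1, p2⟩ := hπ
    have hπp : IsProbabilityMeasure π := by
      refine ⟨?_⟩
      have : (π.map Prod.fst) Set.univ = 1 := by rw [p1]; simp
      rwa [Measure.map_apply measurable_fst MeasurableSet.univ] at this
    have k1 : Measurable (fun p : (ℝ × ℝ) × (ℝ × ℝ) => (p.1, p.2.1)) := by fun_prop
    have k2 : Measurable (fun p : (ℝ × ℝ) × (ℝ × ℝ) => (p.1.2, p.2)) := by fun_prop
    have hmem : (π.map (fun p => (p.1, p.2.1)), π.map (fun p => (p.1.2, p.2))) ∈ Flows μ ν := by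
      refine ⟨Measure.isProbabilityMeasure_map k1.aemeasurable,
        Measure.isProbabilityMeasure_map k2.aemeasurable, ?_, ?_, ?_⟩
      · rw [Measure.map_map measurable_fst k1]; exact p1
      · rw [Measure.map_map measurable_snd k2]; exact p2
      · rw [Measure.map_map (by fun_prop) k1, Measure.map_map (by fun_prop) k2]; rfl
    refine le_trans (iInf₂_le (f := fun G (_ : G ∈ Flows μ ν) =>
      CT (fun a b => f (a - b)) (fun a b => f (a - b)) G) _ hmem) (le_of_eq ?_)
    rw [CT, lintegral_map (by fun_prop) k1, lintegral_map (by fun_prop) k2,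
      ← lintegral_add_left (by fun_prop)]
end
end
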